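/- arXiv:2105.08608 — 2 statements merged into one kernel-verified Lean document; each statement's English description precedes it below -/
import Mathlib

section
/- For every η > 0 there exists n_0 > 0 such that the following holds: let n ≥ n_0 be an integer divisible by 4, and let H be a stable 3-graph on vertex set [n]. If e(H) > binom(n,3) - binom(3n/4,3) - η^4·n^3 and the maximum matching size ν(H) < n/4, then H is η-close to H_3^*(n, n/4 - 1), i.e., there is an isomorphic copy H' of H on [n] with |E(H_3^*(n,n/4-1)) \ E(H')| < η·n^3. -/
/-- A 3-graph `H` on `[n]` (modelled as `Fin n`, with its natural order) is stable
if whenever `e ≤ f` coordinatewise (the `i`-th smallest element of `e` is at most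
the `i`-th smallest element of `f`) and `f ∈ H`, also `e ∈ H`. -/
def StableThreeGraph {n : ℕ} (H : Finset (Finset (Fin n))) : Prop :=
  ∀ (e f : Finset (Fin n)) (he : e.card = 3) (hf : f.card = 3),
    (∀ i : Fin 3, ((e.orderIsoOfFin he i : Fin n) : ℕ) ≤ ((f.orderIsoOfFin hf i : Fin n) : ℕ)) →
    f ∈ H → e ∈ H

/-- The 3-graph `H₃^*(n, m)` on `[n]`: all triples meeting `[m]` (the first `m`
elements of `Fin n`). -/
def H3Star (n m : ℕ) : Finset (Finset (Fin n)) :=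
  (Finset.powersetCard 3 (Finset.univ : Finset (Fin n))).filter
    (fun e => ∃ v : Fin n, v ∈ e ∧ (v : ℕ) < m)

lemma two_prod_bound {a b : ℝ} (ha : 0 ≤ a) (ha1 : a ≤ 1) (hb : 0 ≤ b) (hb1 : b ≤ 1) :
    4 * (1 + a + b) ^ 2 ≤ 9 * ((1 + a) * (1 + b)) := by
  nlinarith [mul_nonneg (sub_nonneg.2 ha1) (sub_nonneg.2 hb1), mul_nonneg ha (sub_nonneg.2 ha1),
    mul_nonneg hb (sub_nonneg.2 hb1)]

lemma four_ninths_le_compl {a b p r : ℝ} (ha : 0 ≤ a) (ha1 : a ≤ 1) (hb : 0 ≤ b) (hb1 : b ≤ 1)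
    (hp : p * (1 + a + b) ≤ a) (hr : r * (1 + a + b) ≤ b) :
    4 / 9 ≤ (1 - p) * (1 - r) := by
  have h := two_prod_bound ha ha1 hb hb1
  have hR : 0 < 1 + a + b := by positivity
  have h1 : 1 + b ≤ (1 - p) * (1 + a + b) := by linarith
  have h2 : 1 + a ≤ (1 - r) * (1 + a + b) := by linarith
  have h3 := mul_le_mul h1 h2 (by positivity) (by linarith)
  have : 4 / 9 * (1 + a + b) ^ 2 ≤ ((1 - p) * (1 - r)) * (1 + a + b) ^ 2 := by nlinarith
  exact le_of_mul_le_mul_right this (by positivity)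

/-- The parameters of a two-point law taking the values `μ - M / 4` and `μ + β / 4`, the latter
with probability `p`, whose mean is `μ`. -/
structure TwoPointLaw (p M β : ℝ) : Prop where
  p_nonneg : 0 ≤ p
  p_le_one : p ≤ 1
  M_nonneg : 0 ≤ M
  M_le_one : M ≤ 1
  β_pos : 0 < β
  mean : p * (M + β) = M

namespace TwoPointLaw

variable {p₁ p₂ p₃ M₁ M₂ M₃ β₁ β₂ β₃ R : ℝ}

lemma mul_le (h : TwoPointLaw p₁ M₁ β₁) (hR : R ≤ M₁ + β₁) : p₁ * R ≤ M₁ :=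
  (mul_le_mul_of_nonneg_left hR h.p_nonneg).trans h.mean.le

lemma mul_one_add_le (h : TwoPointLaw p₁ M₁ β₁) : p₁ * (1 + β₁) ≤ 1 := by
  nlinarith [h.mean, h.p_le_one, h.M_le_one]

lemma le_half (h : TwoPointLaw p₁ M₁ β₁) (hβ : 1 ≤ β₁) : p₁ ≤ 1 / 2 := by
  nlinarith [h.mul_one_add_le, h.p_nonneg]

lemma two_singles (h₁ : TwoPointLaw p₁ M₁ β₁) (h₂ : TwoPointLaw p₂ M₂ β₂)
    (hM : 0 ≤ M₃) (s₁ : 1 + M₂ + M₃ ≤ β₁) (s₂ : 1 + M₁ + M₃ ≤ β₂) :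
    4 / 9 ≤ (1 - p₁) * (1 - p₂) :=
  four_ninths_le_compl h₁.M_nonneg h₁.M_le_one h₂.M_nonneg h₂.M_le_one
    (h₁.mul_le (by linarith)) (h₂.mul_le (by linarith))

lemma single_double_of_le (h₁ : TwoPointLaw p₁ M₁ β₁) (h₂ : TwoPointLaw p₂ M₂ β₂)
    (h₃ : TwoPointLaw p₃ M₃ β₃) (s₃ : 1 + M₁ + M₂ ≤ β₃) (d : 1 + M₃ ≤ β₁ + β₂)
    (hle : M₁ ≤ M₂) : 4 / 9 ≤ (1 - p₁ * p₂) * (1 - p₃) := by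
  refine four_ninths_le_compl h₂.M_nonneg h₂.M_le_one h₃.M_nonneg h₃.M_le_one ?_
    (h₃.mul_le (by linarith [h₁.M_nonneg]))
  rcases h₁.M_nonneg.eq_or_lt with h0 | h0
  · have : p₁ = 0 := by
      rcases mul_eq_zero.1 (h₁.mean.trans h0.symm) with h | h
      · exact h
      · linarith [h₁.β_pos]
    simpa [this] using h₂.M_nonneg
  have hx : M₁ * (1 + M₂ + M₃) ≤ (M₁ + β₁) * (M₂ + β₂) := by
    nlinarith [mul_pos h₁.β_pos h₂.β_pos, mul_nonneg (sub_nonneg.2 hle) h₁.β_pos.le]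
  have hy : p₁ * p₂ * ((M₁ + β₁) * (M₂ + β₂)) = M₁ * M₂ := by
    linear_combination M₂ * h₁.mean + p₁ * (M₁ + β₁) * h₂.mean
  have hz := mul_le_mul_of_nonneg_left hx (mul_nonneg h₁.p_nonneg h₂.p_nonneg)
  have : M₁ * (p₁ * p₂ * (1 + M₂ + M₃)) ≤ M₁ * M₂ := by linarith
  exact le_of_mul_le_mul_left this h0

lemma single_double (h₁ : TwoPointLaw p₁ M₁ β₁) (h₂ : TwoPointLaw p₂ M₂ β₂)
    (h₃ : TwoPointLaw p₃ M₃ β₃) (s₃ : 1 + M₁ + M₂ ≤ β₃) (d : 1 + M₃ ≤ β₁ + β₂) :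
    4 / 9 ≤ (1 - p₁ * p₂) * (1 - p₃) := by
  rcases le_total M₁ M₂ with h | h
  · exact single_double_of_le h₁ h₂ h₃ s₃ d h
  · rw [mul_comm p₁]
    exact single_double_of_le h₂ h₁ h₃ (by linarith) (by linarith) h

lemma single_le_half (h₁ : TwoPointLaw p₁ M₁ β₁) (hM₂ : 0 ≤ M₂) (hM₃ : 0 ≤ M₃)
    (s₁ : 1 + M₂ + M₃ ≤ β₁) : p₁ ≤ 1 / 2 :=
  h₁.le_half (by linarith)

lemma double_le_half (h₁ : TwoPointLaw p₁ M₁ β₁) (h₂ : TwoPointLaw p₂ M₂ β₂)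
    (d : 1 ≤ β₁ + β₂) : p₁ * p₂ ≤ 1 / 2 := by
  have h := mul_le_mul h₁.mul_one_add_le h₂.mul_one_add_le
    (mul_nonneg h₂.p_nonneg (by linarith [h₂.β_pos])) zero_le_one
  nlinarith [mul_pos h₁.β_pos h₂.β_pos, mul_nonneg h₁.p_nonneg h₂.p_nonneg]

lemma triple_le_half (h₁ : TwoPointLaw p₁ M₁ β₁) (h₂ : TwoPointLaw p₂ M₂ β₂)
    (h₃ : TwoPointLaw p₃ M₃ β₃) (d : 1 ≤ β₁ + β₂ + β₃) : p₁ * p₂ * p₃ ≤ 1 / 2 := by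
  have hb₁ := h₁.β_pos
  have hb₂ := h₂.β_pos
  have hb₃ := h₃.β_pos
  have h := mul_le_mul h₁.mul_one_add_le h₂.mul_one_add_le
    (mul_nonneg h₂.p_nonneg (by linarith)) zero_le_one
  have h' := mul_le_mul h h₃.mul_one_add_le
    (mul_nonneg h₃.p_nonneg (by linarith)) (by norm_num)
  have hP := mul_nonneg (mul_nonneg h₁.p_nonneg h₂.p_nonneg) h₃.p_nonneg
  have h2 : 2 ≤ (1 + β₁) * (1 + β₂) * (1 + β₃) := by
    have : 0 < β₁ * β₂ + β₁ * β₃ + β₂ * β₃ + β₁ * β₂ * β₃ := by positivity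
    linarith
  have := mul_le_mul_of_nonneg_left h2 hP
  linarith

end TwoPointLaw

lemma doubles_polynomial_bound {a b t : ℝ} (ha : 0 ≤ a) (ha1 : a ≤ 1) (hb : 0 ≤ b)
    (hb1 : b ≤ 1) (ht : 0 ≤ t) (ht1 : t ≤ 1) :
    (a + b) * (a + b + 1 - t) - (1 - t) * (a * b) ≤ 5 / 9 * (1 + t) * (a + b + 1 - t) ^ 2 := by
  obtain ⟨u, rfl⟩ : ∃ u, t = 1 - u := ⟨1 - t, by ring⟩
  have hu : 0 ≤ u := by linarith
  have hu1 : 0 ≤ 1 - u := by linarith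
  have h1 := mul_nonneg hu (mul_nonneg ha (sub_nonneg.2 ha1))
  have h2 := mul_nonneg hu (mul_nonneg hb (sub_nonneg.2 hb1))
  have h3 := mul_nonneg (sq_nonneg u) hu1
  have h4 := mul_nonneg hu1 (mul_nonneg ha hb)
  have h5 := mul_nonneg (add_nonneg ha hb) (mul_nonneg hu hu1)
  have h6 : 0 ≤ (1 - u ^ 2) * (a + b) ^ 2 := mul_nonneg (by nlinarith) (sq_nonneg _)
  have h7 : 0 ≤ u ^ 2 * ((2 - (a + b)) * (10 / 3 - (a + b))) :=
    mul_nonneg (sq_nonneg u) (mul_nonneg (by linarith) (by linarith))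
  nlinarith [sq_nonneg (a - b)]

lemma doubles_bound {p₁ p₂ p₃ a b t : ℝ} (hp₂ : 0 ≤ p₂) (hp₂' : p₂ ≤ 1)
    (hp₃ : 0 ≤ p₃) (hp₃' : p₃ ≤ 1) (ha : 0 ≤ a) (ha1 : a ≤ 1) (hb : 0 ≤ b) (hb1 : b ≤ 1)
    (ht : 0 ≤ t) (ht1 : t < 1)
    (h₁ : p₁ * (1 + t) ≤ 1) (h₂ : p₂ * (a + b + 1 - t) ≤ a) (h₃ : p₃ * (a + b + 1 - t) ≤ b) :
    p₁ * (p₂ + p₃ - 2 * (p₂ * p₃)) + p₂ * p₃ ≤ 5 / 9 := by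
  set R := a + b + 1 - t with hRdef
  have hR : 0 < R := by linarith
  have e1 : (p₁ * (p₂ + p₃ - 2 * (p₂ * p₃)) + p₂ * p₃) * (1 + t)
      ≤ p₂ + p₃ - (1 - t) * (p₂ * p₃) := by
    have : 0 ≤ p₂ + p₃ - 2 * (p₂ * p₃) := by nlinarith
    nlinarith
  have e2 : (p₂ + p₃ - (1 - t) * (p₂ * p₃)) * R ^ 2 ≤ (a + b) * R - (1 - t) * (a * b) := by
    have i1 : (p₂ * (1 - (1-t) * p₃)) * R ≤ a * (1 - (1-t) * p₃) := by
      have : 0 ≤ 1 - (1-t) * p₃ := by nlinarith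
      nlinarith
    have i2 : (p₃ * R) * (R - (1 - t) * a) ≤ b * (R - (1 - t) * a) := by
      have : 0 ≤ R - (1-t) * a := by nlinarith
      nlinarith
    nlinarith
  have e3 : (a + b) * R - (1 - t) * (a * b) ≤ 5 / 9 * (1 + t) * R ^ 2 := by
    exact doubles_polynomial_bound ha ha1 hb hb1 ht ht1.le
  have : (p₁ * (p₂ + p₃ - 2 * (p₂ * p₃)) + p₂ * p₃) * ((1 + t) * R ^ 2) ≤ 5 / 9 * ((1 + t) * R ^ 2) := by
    nlinarith [sq_nonneg R]
  exact le_of_mul_le_mul_right this (by positivity)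

lemma three_prod {a b c : ℝ} (ha : 0 ≤ a) (ha1 : a ≤ 1) (hb : 0 ≤ b) (hb1 : b ≤ 1)
    (hc : 0 ≤ c) (hc1 : c ≤ 1) :
    (27 + (3 - a - b - c)) * (1 + a + b + c) ^ 3 ≤
      64 * ((1 + b + c) * (1 + a + c) * (1 + a + b)) := by
  obtain ⟨x, rfl⟩ : ∃ x, a = 1 - x := ⟨1 - a, by ring⟩
  obtain ⟨y, rfl⟩ : ∃ y, b = 1 - y := ⟨1 - b, by ring⟩
  obtain ⟨z, rfl⟩ : ∃ z, c = 1 - z := ⟨1 - c, by ring⟩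
  have hx : 0 ≤ x := by linarith
  have hy : 0 ≤ y := by linarith
  have hz : 0 ≤ z := by linarith
  obtain ⟨s, hs⟩ : ∃ s, s = x + y + z := ⟨_, rfl⟩
  obtain ⟨e, he⟩ : ∃ e, e = x * y + y * z + z * x := ⟨_, rfl⟩
  obtain ⟨f, hf⟩ : ∃ f, f = x * y * z := ⟨_, rfl⟩
  have hprod : (1 + (1 - y) + (1 - z)) * (1 + (1 - x) + (1 - z)) * (1 + (1 - x) + (1 - y))
      = 3 * (3 - s) ^ 2 + (3 - s) * e + f := by
    rw [hs, he, hf]; ring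
  have hl : (27 + (3 - (1 - x) - (1 - y) - (1 - z))) * (1 + (1 - x) + (1 - y) + (1 - z)) ^ 3
      = (27 + s) * (4 - s) ^ 3 := by rw [hs]; ring
  rw [hprod, hl]
  have he0 : 0 ≤ e := by rw [he]; positivity
  have hf0 : 0 ≤ f := by rw [hf]; positivity
  have hs0 : 0 ≤ s := by rw [hs]; positivity
  have hs3 : 0 ≤ 3 - s := by linarith
  have hef : s - 1 + f ≤ e := by
    have := mul_nonneg (mul_nonneg ha hb) hc
    rw [hs, he, hf]; linarith
  have hf2 : s - 2 ≤ f := by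
    rw [hs, hf]
    nlinarith [mul_nonneg ha hb, mul_nonneg (sub_nonneg.2 (mul_le_one₀ (by linarith : x ≤ 1) hy (by linarith : y ≤ 1))) hc]
  rcases le_total s 1 with h | h
  · have h0 : 0 ≤ s * (80 - 84 * s + 15 * s ^ 2 + s ^ 3) :=
      mul_nonneg hs0 (by nlinarith [pow_nonneg hs0 3, sq_nonneg (s - 1)])
    linarith [mul_nonneg hs3 he0]
  have h1 := mul_le_mul_of_nonneg_left hef hs3
  have h4 : 0 ≤ 4 - s := by linarith
  rcases le_total s 2 with h' | h'
  · have h2 : 0 ≤ (4 - s) * (128 * (3 - s) - (27 + s) * (4 - s) ^ 2) :=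
      mul_nonneg h4 (by nlinarith [mul_nonneg (sub_nonneg.2 h) (sub_nonneg.2 h')])
    linarith [mul_nonneg h4 hf0]
  · have h2 : 0 ≤ (4 - s) ^ 2 * (64 - (27 + s) * (4 - s)) :=
      mul_nonneg (sq_nonneg _) (by nlinarith)
    linarith [mul_le_mul_of_nonneg_left hf2 h4]

namespace TwoPointLaw

variable {p₁ p₂ p₃ M₁ M₂ M₃ β₁ β₂ β₃ : ℝ}

lemma majority (h₁ : TwoPointLaw p₁ M₁ β₁) (h₂ : TwoPointLaw p₂ M₂ β₂)
    (h₃ : TwoPointLaw p₃ M₃ β₃) (d₁₂ : 1 + M₃ ≤ β₁ + β₂) (d₁₃ : 1 + M₂ ≤ β₁ + β₃)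
    (hβ : β₁ < 1) :
    p₁ * (p₂ + p₃ - 2 * (p₂ * p₃)) + p₂ * p₃ ≤ 5 / 9 :=
  doubles_bound h₂.p_nonneg h₂.p_le_one h₃.p_nonneg h₃.p_le_one h₂.M_nonneg h₂.M_le_one
    h₃.M_nonneg h₃.M_le_one h₁.β_pos.le hβ h₁.mul_one_add_le (h₂.mul_le (by linarith))
    (h₃.mul_le (by linarith))

lemma majority_of_le_half (hp₂ : 0 ≤ p₂) (hp₃ : 0 ≤ p₃)
    (h₁ : p₁ ≤ 1 / 2) (h₂ : p₂ ≤ 1 / 2) (h₃ : p₃ ≤ 1 / 2) :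
    p₁ * (p₂ + p₃ - 2 * (p₂ * p₃)) + p₂ * p₃ ≤ 5 / 9 := by
  have h : 0 ≤ p₂ + p₃ - 2 * (p₂ * p₃) := by nlinarith
  nlinarith

lemma no_failure (h₁ : TwoPointLaw p₁ M₁ β₁) (h₂ : TwoPointLaw p₂ M₂ β₂)
    (h₃ : TwoPointLaw p₃ M₃ β₃) (s₁ : 1 + M₂ + M₃ ≤ β₁) (s₂ : 1 + M₁ + M₃ ≤ β₂)
    (s₃ : 1 + M₁ + M₂ ≤ β₃) :
    (27 + (3 - M₁ - M₂ - M₃)) / 64 ≤ (1 - p₁) * (1 - p₂) * (1 - p₃) := by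
  have hp := three_prod h₁.M_nonneg h₁.M_le_one h₂.M_nonneg h₂.M_le_one h₃.M_nonneg h₃.M_le_one
  have g₁ := h₁.mul_le (R := 1 + M₁ + M₂ + M₃) (by linarith)
  have g₂ := h₂.mul_le (R := 1 + M₁ + M₂ + M₃) (by linarith)
  have g₃ := h₃.mul_le (R := 1 + M₁ + M₂ + M₃) (by linarith)
  have k₁ := h₁.M_nonneg
  have k₂ := h₂.M_nonneg
  have k₃ := h₃.M_nonneg
  have hR : 0 < 1 + M₁ + M₂ + M₃ := by positivity
  have f₁ : 1 + M₂ + M₃ ≤ (1 - p₁) * (1 + M₁ + M₂ + M₃) := by linarith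
  have f₂ : 1 + M₁ + M₃ ≤ (1 - p₂) * (1 + M₁ + M₂ + M₃) := by linarith
  have f₃ : 1 + M₁ + M₂ ≤ (1 - p₃) * (1 + M₁ + M₂ + M₃) := by linarith
  have f₁₂ := mul_le_mul f₁ f₂ (by positivity) (by linarith)
  have f := mul_le_mul f₁₂ f₃ (by positivity) (le_trans (by positivity) f₁₂)
  have : (27 + (3 - M₁ - M₂ - M₃)) / 64 * (1 + M₁ + M₂ + M₃) ^ 3
      ≤ (1 - p₁) * (1 - p₂) * (1 - p₃) * (1 + M₁ + M₂ + M₃) ^ 3 := by linarith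
  exact le_of_mul_le_mul_right this (by positivity)

lemma missing_single (h₁ : TwoPointLaw p₁ M₁ β₁) (h₂ : TwoPointLaw p₂ M₂ β₂)
    (h₃ : TwoPointLaw p₃ M₃ β₃) {x₁ x₂ x₃ x₁₂ x₁₃ x₂₃ x : ℝ}
    (b₁ : x₁ ≤ p₁ * (1 - p₂) * (1 - p₃)) (b₂ : x₂ ≤ (1 - p₁) * p₂ * (1 - p₃))
    (b₃ : x₃ ≤ (1 - p₁) * (1 - p₂) * p₃) (b₁₂ : x₁₂ ≤ p₁ * p₂ * (1 - p₃))
    (b₁₃ : x₁₃ ≤ p₁ * (1 - p₂) * p₃) (b₂₃ : x₂₃ ≤ (1 - p₁) * p₂ * p₃)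
    (b : x ≤ p₁ * p₂ * p₃)
    (s₁ : x₁ ≤ 0 ∨ 1 + M₂ + M₃ ≤ β₁) (s₂ : x₂ ≤ 0 ∨ 1 + M₁ + M₃ ≤ β₂)
    (s₃ : x₃ ≤ 0 ∨ 1 + M₁ + M₂ ≤ β₃) (d₁₂ : x₁₂ ≤ 0 ∨ 1 + M₃ ≤ β₁ + β₂)
    (d₁₃ : x₁₃ ≤ 0 ∨ 1 + M₂ ≤ β₁ + β₃) (d₂₃ : x₂₃ ≤ 0 ∨ 1 + M₁ ≤ β₂ + β₃)
    (t : x ≤ 0 ∨ 1 ≤ β₁ + β₂ + β₃) (hs : x₁ ≤ 0 ∨ x₂ ≤ 0 ∨ x₃ ≤ 0) :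
    x₁ + x₂ + x₃ + x₁₂ + x₁₃ + x₂₃ + x ≤ 5 / 9 := by
  have n₁ := h₁.p_nonneg
  have n₂ := h₂.p_nonneg
  have n₃ := h₃.p_nonneg
  have q₁ := sub_nonneg.2 h₁.p_le_one
  have q₂ := sub_nonneg.2 h₂.p_le_one
  have q₃ := sub_nonneg.2 h₃.p_le_one
  have k₁ := h₁.M_nonneg
  have k₂ := h₂.M_nonneg
  have k₃ := h₃.M_nonneg
  have w₀ : 0 ≤ (1 - p₁) * (1 - p₂) * (1 - p₃) := by positivity
  have w₁ : 0 ≤ p₁ * (1 - p₂) * (1 - p₃) := by positivity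
  have w₂ : 0 ≤ (1 - p₁) * p₂ * (1 - p₃) := by positivity
  have w₃ : 0 ≤ (1 - p₁) * (1 - p₂) * p₃ := by positivity
  have w₁₂ : 0 ≤ p₁ * p₂ * (1 - p₃) := by positivity
  have w₁₃ : 0 ≤ p₁ * (1 - p₂) * p₃ := by positivity
  have w₂₃ : 0 ≤ (1 - p₁) * p₂ * p₃ := by positivity
  have w : 0 ≤ p₁ * p₂ * p₃ := by positivity
  rcases s₁ with s₁ | s₁ <;> rcases s₂ with s₂ | s₂ <;> rcases s₃ with s₃ | s₃
  · rcases d₁₂ with d₁₂ | d₁₂ <;> rcases d₁₃ with d₁₃ | d₁₃ <;> rcases d₂₃ with d₂₃ | d₂₃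
    · rcases t with t | t
      · linarith
      · linarith [triple_le_half h₁ h₂ h₃ t]
    · linarith [double_le_half h₂ h₃ (by linarith)]
    · linarith [double_le_half h₁ h₃ (by linarith)]
    · rcases lt_or_ge β₃ 1 with hb | hb
      · linarith [majority h₃ h₁ h₂ (by linarith) (by linarith) hb]
      · linarith [h₃.le_half hb]
    · linarith [double_le_half h₁ h₂ (by linarith)]
    · rcases lt_or_ge β₂ 1 with hb | hb
      · linarith [majority h₂ h₁ h₃ (by linarith) (by linarith) hb]
      · linarith [h₂.le_half hb]
    · rcases lt_or_ge β₁ 1 with hb | hb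
      · linarith [majority h₁ h₂ h₃ (by linarith) (by linarith) hb]
      · linarith [h₁.le_half hb]
    · rcases lt_or_ge β₁ 1 with hb₁ | hb₁
      · linarith [majority h₁ h₂ h₃ (by linarith) (by linarith) hb₁]
      rcases lt_or_ge β₂ 1 with hb₂ | hb₂
      · linarith [majority h₂ h₁ h₃ (by linarith) (by linarith) hb₂]
      rcases lt_or_ge β₃ 1 with hb₃ | hb₃
      · linarith [majority h₃ h₁ h₂ (by linarith) (by linarith) hb₃]
      linarith [majority_of_le_half n₂ n₃ (h₁.le_half hb₁) (h₂.le_half hb₂) (h₃.le_half hb₃)]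
  · rcases d₁₂ with d₁₂ | d₁₂
    · linarith [h₃.single_le_half k₁ k₂ s₃]
    · linarith [single_double h₁ h₂ h₃ s₃ d₁₂]
  · rcases d₁₃ with d₁₃ | d₁₃
    · linarith [h₂.single_le_half k₁ k₃ s₂]
    · linarith [single_double h₁ h₃ h₂ (by linarith) d₁₃]
  · linarith [two_singles h₂ h₃ k₁ (by linarith) (by linarith)]
  · rcases d₂₃ with d₂₃ | d₂₃
    · linarith [h₁.single_le_half k₂ k₃ s₁]
    · linarith [single_double h₂ h₃ h₁ s₁ d₂₃]
  · linarith [two_singles h₁ h₃ k₂ (by linarith) (by linarith)]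
  · linarith [two_singles h₁ h₂ k₃ s₁ s₂]
  · rcases hs with hs | hs | hs
    · linarith [two_singles h₂ h₃ k₁ (by linarith) (by linarith)]
    · linarith [two_singles h₁ h₃ k₂ (by linarith) (by linarith)]
    · linarith [two_singles h₁ h₂ k₃ s₁ s₂]

end TwoPointLaw

/-- The indicator of `1 ≤ x + y + z`, with a bonus of `(1 - τ) / 16` when all three values are
below `τ`. -/
noncomputable def tripleWeight (τ x y z : ℝ) : ℝ :=
  if 1 ≤ x + y + z then (if x < τ ∧ y < τ ∧ z < τ then 1 + (1 - τ) / 16 else 1) else 0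

section tripleWeight

variable {τ x y z : ℝ}

lemma tripleWeight_eq_zero (h : x + y + z < 1) : tripleWeight τ x y z = 0 :=
  if_neg (not_le.2 h)

lemma tripleWeight_nonneg (hτ : τ ≤ 1) : 0 ≤ tripleWeight τ x y z := by
  unfold tripleWeight
  split_ifs <;> linarith

lemma tripleWeight_le (hτ : τ ≤ 1) : tripleWeight τ x y z ≤ 1 + (1 - τ) / 16 := by
  unfold tripleWeight
  split_ifs <;> linarith

lemma tripleWeight_le_one (h : τ ≤ x ∨ τ ≤ y ∨ τ ≤ z) : tripleWeight τ x y z ≤ 1 := by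
  unfold tripleWeight
  split_ifs with h1 h2
  · rcases h with h | h | h <;> linarith [h2.1, h2.2.1, h2.2.2]
  all_goals norm_num

end tripleWeight

lemma twoPoint_expectation_le {τ p₁ p₂ p₃ μ u₁ v₁ u₂ v₂ u₃ v₃ : ℝ} (hτ0 : 7 / 20 ≤ τ) (hτ : τ ≤ 1)
    (hμ : μ ≤ 1 / 4) (hu₁ : 0 ≤ u₁) (hu₂ : 0 ≤ u₂) (hu₃ : 0 ≤ u₃)
    (h₁ : TwoPointLaw p₁ (4 * (μ - u₁)) (4 * (v₁ - μ)))
    (h₂ : TwoPointLaw p₂ (4 * (μ - u₂)) (4 * (v₂ - μ)))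
    (h₃ : TwoPointLaw p₃ (4 * (μ - u₃)) (4 * (v₃ - μ))) :
    (1 - p₁) * p₂ * p₃ * tripleWeight τ u₁ v₂ v₃ + p₁ * (1 - p₂) * p₃ * tripleWeight τ v₁ u₂ v₃
    + p₁ * p₂ * (1 - p₃) * tripleWeight τ v₁ v₂ u₃
    + p₁ * (1 - p₂) * (1 - p₃) * tripleWeight τ v₁ u₂ u₃
    + (1 - p₁) * p₂ * (1 - p₃) * tripleWeight τ u₁ v₂ u₃
    + (1 - p₁) * (1 - p₂) * p₃ * tripleWeight τ u₁ u₂ v₃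
    + p₁ * p₂ * p₃ * tripleWeight τ v₁ v₂ v₃ ≤ 37 / 64 := by
  have n₁ := h₁.p_nonneg
  have n₂ := h₂.p_nonneg
  have n₃ := h₃.p_nonneg
  have q₁ := sub_nonneg.2 h₁.p_le_one
  have q₂ := sub_nonneg.2 h₂.p_le_one
  have q₃ := sub_nonneg.2 h₃.p_le_one
  have w₀ : 0 ≤ (1 - p₁) * (1 - p₂) * (1 - p₃) := by positivity
  have w₁ : 0 ≤ p₁ * (1 - p₂) * (1 - p₃) := by positivity
  have w₂ : 0 ≤ (1 - p₁) * p₂ * (1 - p₃) := by positivity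
  have w₃ : 0 ≤ (1 - p₁) * (1 - p₂) * p₃ := by positivity
  have w₁₂ : 0 ≤ p₁ * p₂ * (1 - p₃) := by positivity
  have w₁₃ : 0 ≤ p₁ * (1 - p₂) * p₃ := by positivity
  have w₂₃ : 0 ≤ (1 - p₁) * p₂ * p₃ := by positivity
  have w : 0 ≤ p₁ * p₂ * p₃ := by positivity
  by_cases hall : 1 ≤ v₁ + u₂ + u₃ ∧ 1 ≤ u₁ + v₂ + u₃ ∧ 1 ≤ u₁ + u₂ + v₃
  · obtain ⟨s₁, s₂, s₃⟩ := hall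
    have hno := TwoPointLaw.no_failure h₁ h₂ h₃ (by linarith) (by linarith) (by linarith)
    by_cases hv : τ ≤ v₁ ∧ τ ≤ v₂ ∧ τ ≤ v₃
    · obtain ⟨t₁, t₂, t₃⟩ := hv
      have := mul_le_mul_of_nonneg_left
        (tripleWeight_le_one (x := v₁) (y := u₂) (z := u₃) (Or.inl t₁)) w₁
      have := mul_le_mul_of_nonneg_left
        (tripleWeight_le_one (x := u₁) (y := v₂) (z := u₃) (Or.inr (Or.inl t₂))) w₂
      have := mul_le_mul_of_nonneg_left
        (tripleWeight_le_one (x := u₁) (y := u₂) (z := v₃) (Or.inr (Or.inr t₃))) w₃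
      have := mul_le_mul_of_nonneg_left
        (tripleWeight_le_one (x := v₁) (y := v₂) (z := u₃) (Or.inl t₁)) w₁₂
      have := mul_le_mul_of_nonneg_left
        (tripleWeight_le_one (x := v₁) (y := u₂) (z := v₃) (Or.inl t₁)) w₁₃
      have := mul_le_mul_of_nonneg_left
        (tripleWeight_le_one (x := u₁) (y := v₂) (z := v₃) (Or.inr (Or.inl t₂))) w₂₃
      have := mul_le_mul_of_nonneg_left
        (tripleWeight_le_one (x := v₁) (y := v₂) (z := v₃) (Or.inl t₁)) w
      linarith
    · have hgap : 1 - τ ≤ u₁ + u₂ + u₃ := by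
        by_contra hc
        exact hv ⟨by linarith, by linarith, by linarith⟩
      have := mul_le_mul_of_nonneg_left (tripleWeight_le (x := v₁) (y := u₂) (z := u₃) hτ) w₁
      have := mul_le_mul_of_nonneg_left (tripleWeight_le (x := u₁) (y := v₂) (z := u₃) hτ) w₂
      have := mul_le_mul_of_nonneg_left (tripleWeight_le (x := u₁) (y := u₂) (z := v₃) hτ) w₃
      have := mul_le_mul_of_nonneg_left (tripleWeight_le (x := v₁) (y := v₂) (z := u₃) hτ) w₁₂
      have := mul_le_mul_of_nonneg_left (tripleWeight_le (x := v₁) (y := u₂) (z := v₃) hτ) w₁₃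
      have := mul_le_mul_of_nonneg_left (tripleWeight_le (x := u₁) (y := v₂) (z := v₃) hτ) w₂₃
      have := mul_le_mul_of_nonneg_left (tripleWeight_le (x := v₁) (y := v₂) (z := v₃) hτ) w
      have := mul_nonneg w₀ (sub_nonneg.2 hτ)
      linarith
  · set C := 1 + (1 - τ) / 16 with hC
    have hC0 : 0 < C := by linarith
    have scale : ∀ {a x y z : ℝ}, 0 ≤ a → a * tripleWeight τ x y z / C ≤ a := by
      intro a x y z ha
      rw [div_le_iff₀ hC0]
      exact mul_le_mul_of_nonneg_left (tripleWeight_le hτ) ha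
    have zero : ∀ {a x y z : ℝ}, x + y + z < 1 → a * tripleWeight τ x y z / C ≤ 0 := by
      intro a x y z h
      simp [tripleWeight_eq_zero h]
    have alt : ∀ (a x y z l r : ℝ), (1 ≤ x + y + z → l ≤ r) →
        a * tripleWeight τ x y z / C ≤ 0 ∨ l ≤ r := by
      intro a x y z l r h
      rcases lt_or_ge (x + y + z) 1 with h' | h'
      · exact Or.inl (zero h')
      · exact Or.inr (h h')
    have key := TwoPointLaw.missing_single h₁ h₂ h₃
      (scale (x := v₁) (y := u₂) (z := u₃) w₁) (scale (x := u₁) (y := v₂) (z := u₃) w₂)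
      (scale (x := u₁) (y := u₂) (z := v₃) w₃) (scale (x := v₁) (y := v₂) (z := u₃) w₁₂)
      (scale (x := v₁) (y := u₂) (z := v₃) w₁₃) (scale (x := u₁) (y := v₂) (z := v₃) w₂₃)
      (scale (x := v₁) (y := v₂) (z := v₃) w)
      (alt _ _ _ _ _ _ fun h => by linarith) (alt _ _ _ _ _ _ fun h => by linarith)
      (alt _ _ _ _ _ _ fun h => by linarith) (alt _ _ _ _ _ _ fun h => by linarith)
      (alt _ _ _ _ _ _ fun h => by linarith) (alt _ _ _ _ _ _ fun h => by linarith)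
      (alt _ _ _ _ _ _ fun h => by linarith) (by
        by_contra hc
        push Not at hc
        refine hall ⟨?_, ?_, ?_⟩
        · exact not_lt.1 fun h => (hc.1.not_ge (zero h)).elim
        · exact not_lt.1 fun h => (hc.2.1.not_ge (zero h)).elim
        · exact not_lt.1 fun h => (hc.2.2.not_ge (zero h)).elim)
    simp only [← add_div] at key
    rw [div_le_iff₀ hC0] at key
    linarith

lemma twoPoint_law {μ u v : ℝ} (hμ : μ ≤ 1 / 4) (hu : 0 ≤ u) (huμ : u ≤ μ) (hv : μ < v) :
    TwoPointLaw ((μ - u) / (v - u)) (4 * (μ - u)) (4 * (v - μ)) where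
  p_nonneg := div_nonneg (by linarith) (by linarith)
  p_le_one := (div_le_one (by linarith)).2 (by linarith)
  M_nonneg := by linarith
  M_le_one := by linarith
  β_pos := by linarith
  mean := by
    have : v - u ≠ 0 := by linarith
    field_simp
    ring

/-- The trilinear form of `tripleWeight` in three two-point laws of mean `μ`. -/
lemma twoPoint_trilinear_le {τ μ u₁ v₁ u₂ v₂ u₃ v₃ : ℝ} (hτ0 : 7 / 20 ≤ τ) (hτ : τ ≤ 1)
    (hμ : μ ≤ 1 / 4) (hu₁ : 0 ≤ u₁) (hu₂ : 0 ≤ u₂) (hu₃ : 0 ≤ u₃)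
    (hu₁' : u₁ ≤ μ) (hu₂' : u₂ ≤ μ) (hu₃' : u₃ ≤ μ) (hv₁ : μ < v₁) (hv₂ : μ < v₂) (hv₃ : μ < v₃) :
    (v₃ - μ) * ((v₂ - μ) * ((v₁ - μ) * tripleWeight τ u₁ u₂ u₃ + (μ - u₁) * tripleWeight τ v₁ u₂ u₃)
      + (μ - u₂) * ((v₁ - μ) * tripleWeight τ u₁ v₂ u₃ + (μ - u₁) * tripleWeight τ v₁ v₂ u₃))
    + (μ - u₃) * ((v₂ - μ) * ((v₁ - μ) * tripleWeight τ u₁ u₂ v₃ + (μ - u₁) * tripleWeight τ v₁ u₂ v₃)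
      + (μ - u₂) * ((v₁ - μ) * tripleWeight τ u₁ v₂ v₃ + (μ - u₁) * tripleWeight τ v₁ v₂ v₃))
    ≤ 37 / 64 * (v₁ - u₁) * (v₂ - u₂) * (v₃ - u₃) := by
  have key := twoPoint_expectation_le hτ0 hτ hμ hu₁ hu₂ hu₃
    (twoPoint_law hμ hu₁ hu₁' hv₁) (twoPoint_law hμ hu₂ hu₂' hv₂) (twoPoint_law hμ hu₃ hu₃' hv₃)
  have split : ∀ {u v : ℝ}, u ≤ μ → μ < v → ∃ p d, 0 < d ∧ p = (μ - u) / (v - u) ∧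
      v - u = d ∧ μ - u = p * d ∧ v - μ = (1 - p) * d := by
    intro u v hu hv
    have : v - u ≠ 0 := by linarith
    exact ⟨(μ - u) / (v - u), v - u, by linarith, rfl, rfl, by field_simp, by field_simp; ring⟩
  obtain ⟨p₁, d₁, hd₁, e₁, a₁, b₁, c₁⟩ := split hu₁' hv₁
  obtain ⟨p₂, d₂, hd₂, e₂, a₂, b₂, c₂⟩ := split hu₂' hv₂
  obtain ⟨p₃, d₃, hd₃, e₃, a₃, b₃, c₃⟩ := split hu₃' hv₃
  rw [← e₁, ← e₂, ← e₃] at key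
  rw [a₁, a₂, a₃, b₁, b₂, b₃, c₁, c₂, c₃,
    tripleWeight_eq_zero (by linarith : u₁ + u₂ + u₃ < 1)]
  have := mul_le_mul_of_nonneg_right key (mul_pos (mul_pos hd₁ hd₂) hd₃).le
  linarith

/-- A function bounded on average over every two-point law of mean `μ` is bounded on average
over every finitely supported law of mean `μ`. -/
lemma sum_le_of_twoPoint {ι : Type*} [Fintype ι] {f : ι → ℝ} {φ : ℝ → ℝ} {μ C : ℝ}
    (hf0 : ∀ i, 0 ≤ f i) (hf1 : ∀ i, f i ≤ 1) (hμ1 : μ < 1)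
    (hmean : ∑ i, f i = Fintype.card ι * μ)
    (h : ∀ u v, 0 ≤ u → u ≤ μ → μ < v → v ≤ 1 →
      (v - μ) * φ u + (μ - u) * φ v ≤ C * (v - u)) :
    ∑ i, φ (f i) ≤ C * Fintype.card ι := by
  obtain ⟨l, hl⟩ : ∃ l, ∀ i, φ (f i) ≤ C + l * (f i - μ) := by
    rcases (Finset.univ.filter fun i => μ < f i).eq_empty_or_nonempty with hV | hV
    · have hle : ∀ i, f i ≤ μ := fun i => by
        by_contra hc
        have : i ∈ Finset.univ.filter fun i => μ < f i := by simpa using hc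
        simp [hV] at this
      have heq : ∀ i, f i = μ := by
        have : ∑ i, (μ - f i) = 0 := by simp [hmean]
        rw [Finset.sum_eq_zero_iff_of_nonneg fun i _ => sub_nonneg.2 (hle i)] at this
        exact fun i => by linarith [this i (Finset.mem_univ i)]
      refine ⟨0, fun i => ?_⟩
      have := h (f i) 1 (hf0 i) (hle i) hμ1 le_rfl
      rw [heq i] at this ⊢
      have h1 : 0 < 1 - μ := by linarith
      nlinarith
    · obtain ⟨j, hj, hmax⟩ := Finset.exists_max_image _ (fun i => (φ (f i) - C) / (f i - μ)) hV
      have hj' : 0 < f j - μ := by simpa using hj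
      refine ⟨(φ (f j) - C) / (f j - μ), fun i => ?_⟩
      rcases lt_or_ge μ (f i) with hi | hi
      · have := hmax i (by simpa using hi)
        have hi' : 0 < f i - μ := by linarith
        rw [div_le_iff₀ hi'] at this
        linarith
      · have := h (f i) (f j) (hf0 i) hi (by linarith) (hf1 j)
        have e : φ (f j) - C = (φ (f j) - C) / (f j - μ) * (f j - μ) := by
          field_simp
        set l := (φ (f j) - C) / (f j - μ)
        have : (f j - μ) * φ (f i) ≤ (f j - μ) * (C + l * (f i - μ)) := by
          have e' : φ (f j) = C + l * (f j - μ) := by linarith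
          rw [e'] at this
          linarith
        exact le_of_mul_le_mul_left this hj'
  calc ∑ i, φ (f i) ≤ ∑ i, (C + l * (f i - μ)) := Finset.sum_le_sum fun i _ => hl i
    _ = C * Fintype.card ι := by
      rw [Finset.sum_add_distrib, ← Finset.mul_sum, Finset.sum_sub_distrib, hmean]
      simp
      ring

/-- A weighted form of the bound on `P(X + Y + Z ≥ 1)` for independent identically distributed
`X, Y, Z ≥ 0` of mean at most `1 / 4`. -/
lemma sum_tripleWeight_le {ι : Type*} [Fintype ι] {f : ι → ℝ} {τ : ℝ}
    (hτ0 : 7 / 20 ≤ τ) (hτ : τ ≤ 1)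
    (hf0 : ∀ i, 0 ≤ f i) (hf1 : ∀ i, f i ≤ 1) (hsum : ∑ i, f i ≤ Fintype.card ι / 4) :
    ∑ i, ∑ j, ∑ k, tripleWeight τ (f i) (f j) (f k) ≤ 37 / 64 * (Fintype.card ι : ℝ) ^ 3 := by
  rcases isEmpty_or_nonempty ι with hι | hι
  · simp
  have hN : 0 < (Fintype.card ι : ℝ) := by exact_mod_cast Fintype.card_pos
  obtain ⟨μ, hμ⟩ : ∃ μ, μ = (∑ i, f i) / Fintype.card ι := ⟨_, rfl⟩
  have hmean : ∑ i, f i = Fintype.card ι * μ := by rw [hμ]; field_simp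
  have hμ4 : μ ≤ 1 / 4 := by rw [hμ, div_le_iff₀ hN]; linarith
  have hμ1 : μ < 1 := by linarith
  have main := sum_le_of_twoPoint (φ := fun z => ∑ y, ∑ x, tripleWeight τ (f x) (f y) z)
    (C := 37 / 64 * Fintype.card ι * Fintype.card ι) hf0 hf1 hμ1 hmean ?_
  · rw [Finset.sum_comm]
    simp_rw [Finset.sum_comm (s := Finset.univ) (f := fun x z => tripleWeight τ (f x) (f _) (f z))]
    rw [Finset.sum_comm]
    linarith
  intro u₃ v₃ hu₃ hu₃' hv₃ hv₃'
  simp_rw [Finset.mul_sum, ← Finset.sum_add_distrib]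
  have := sum_le_of_twoPoint (φ := fun y => ∑ x, ((v₃ - μ) * tripleWeight τ (f x) y u₃
    + (μ - u₃) * tripleWeight τ (f x) y v₃))
    (C := 37 / 64 * Fintype.card ι * (v₃ - u₃)) hf0 hf1 hμ1 hmean ?_
  · linarith
  intro u₂ v₂ hu₂ hu₂' hv₂ hv₂'
  simp_rw [Finset.mul_sum, ← Finset.sum_add_distrib]
  have := sum_le_of_twoPoint (φ := fun x => (v₂ - μ) * ((v₃ - μ) * tripleWeight τ x u₂ u₃
    + (μ - u₃) * tripleWeight τ x u₂ v₃) + (μ - u₂) * ((v₃ - μ) * tripleWeight τ x v₂ u₃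
    + (μ - u₃) * tripleWeight τ x v₂ v₃))
    (C := 37 / 64 * (v₂ - u₂) * (v₃ - u₃)) hf0 hf1 hμ1 hmean ?_
  · linarith
  intro u₁ v₁ hu₁ hu₁' hv₁ hv₁'
  linarith [twoPoint_trilinear_le hτ0 hτ hμ4 hu₁ hu₂ hu₃ hu₁' hu₂' hu₃' hv₁ hv₂ hv₃]

lemma StableThreeGraph.image_mem {n : ℕ} {H : Finset (Finset (Fin n))} (hH : StableThreeGraph H)
    {e : Finset (Fin n)} (he : e.card = 3) (heH : e ∈ H) {v : Fin 3 → Fin n}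
    (hv : Function.Injective v) (hle : ∀ j, v j ≤ (e.orderIsoOfFin he j : Fin n)) :
    Finset.univ.image v ∈ H := by
  have hc : (Finset.univ.image v).card = 3 := by
    rw [Finset.card_image_of_injective _ hv]; simp
  refine hH _ e hc he (fun i => ?_) heH
  by_contra hlt
  push Not at hlt
  set o := (Finset.univ.image v).orderIsoOfFin hc with ho
  have hmem : ∀ j, v j ∈ Finset.univ.image v := fun j => Finset.mem_image_of_mem v (Finset.mem_univ j)
  have hcard : (Finset.Iic i).card ≤ (Finset.Iio i).card := by
    refine Finset.card_le_card_of_injOn (fun j => o.symm ⟨v j, hmem j⟩) ?_ ?_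
    · intro j hj
      have hj : j ≤ i := by simpa using hj
      have h1 : v j < (o i : Fin n) := by
        calc v j ≤ (e.orderIsoOfFin he j : Fin n) := hle j
          _ ≤ (e.orderIsoOfFin he i : Fin n) := (e.orderIsoOfFin he).monotone hj
          _ < o i := hlt
      simp only [Finset.coe_Iio, Set.mem_Iio]
      rw [OrderIso.symm_apply_lt]
      exact h1
    · intro j _ k _ hjk
      have := o.symm.injective hjk
      exact hv (congrArg Subtype.val this)
  simp at hcard

/-- Linear programming duality for covers of a finite family of triples. -/
lemma exists_cover_or_fractional_matching {κ π : Type*} [Fintype κ] [DecidableEq κ] [Nonempty κ]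
    [Fintype π] (inc : π → Fin 3 → κ) {V : ℝ} (hV : 0 < V) :
    (∃ f : κ → ℝ, (∀ k, 0 ≤ f k) ∧ ∑ k, f k = V ∧ ∀ p, 1 ≤ ∑ j, f (inc p j)) ∨
    ∃ y : π → ℝ, (∀ p, 0 ≤ y p) ∧ ∑ p, y p = V ∧
      ∀ k, ∑ p, y p * (Finset.univ.filter fun j => inc p j = k).card ≤ 1 := by
  classical
  let T : (κ → ℝ) →ₗ[ℝ] (π → ℝ) := LinearMap.pi fun p => V • ∑ j, LinearMap.proj (inc p j)
  have hT : ∀ f p, T f p = V * ∑ j, f (inc p j) := fun f p => by simp [T]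
  by_cases hdis : Disjoint (T '' stdSimplex ℝ κ) (Set.Ici 1)
  · right
    obtain ⟨F, u, v, hu, huv, hv⟩ := geometric_hahn_banach_compact_closed
      ((convex_stdSimplex ℝ κ).linear_image T)
      ((isCompact_stdSimplex ℝ κ).image T.continuous_of_finiteDimensional)
      (convex_Ici (1 : π → ℝ)) isClosed_Ici hdis
    have hF : ∀ z : π → ℝ, F z = ∑ p, z p * F (Pi.single p 1) := fun z => by
      refine ((F : (π → ℝ) →ₗ[ℝ] ℝ).pi_apply_eq_sum_univ z).trans ?_
      refine Finset.sum_congr rfl fun p _ => ?_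
      have hsingle : (fun j => if p = j then (1 : ℝ) else 0) = Pi.single p 1 := by
        ext q
        simp [Pi.single_apply, eq_comm]
      rw [hsingle]
      rfl
    have h1 : v < F 1 := hv 1 (Set.mem_Ici.2 le_rfl)
    have hy : ∀ p, 0 ≤ F (Pi.single p 1) := by
      intro p
      by_contra hneg
      push Not at hneg
      have hs : 0 ≤ (F 1 - v) / (-F (Pi.single p 1)) := div_nonneg (by linarith) (by linarith)
      have := hv (1 + ((F 1 - v) / (-F (Pi.single p 1))) • Pi.single p 1) (by
        rw [Set.mem_Ici]
        refine le_add_of_nonneg_right (smul_nonneg hs ?_)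
        exact Pi.single_nonneg.2 zero_le_one)
      rw [map_add, map_smul, smul_eq_mul, div_neg, neg_mul, div_mul_cancel₀ _ hneg.ne] at this
      linarith
    have hY : F 1 = ∑ p, F (Pi.single p 1) := by rw [hF 1]; simp
    have hcol : ∀ k, V * ∑ p, F (Pi.single p 1) * (Finset.univ.filter fun j => inc p j = k).card
        < F 1 := by
      intro k
      have hk := hu _ (Set.mem_image_of_mem T (single_mem_stdSimplex ℝ k))
      refine lt_trans (lt_of_eq_of_lt ?_ hk) (huv.trans h1)
      rw [hF, Finset.mul_sum]
      refine Finset.sum_congr rfl fun p _ => ?_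
      rw [hT]
      simp [Pi.single_apply]
      ring
    have hpos : 0 < F 1 := by
      obtain ⟨k⟩ := ‹Nonempty κ›
      refine lt_of_le_of_lt ?_ (hcol k)
      exact mul_nonneg hV.le (Finset.sum_nonneg fun p _ => mul_nonneg (hy p) (Nat.cast_nonneg _))
    refine ⟨fun p => V / F 1 * F (Pi.single p 1), fun p => mul_nonneg (by positivity) (hy p), ?_, ?_⟩
    · rw [← Finset.mul_sum, ← hY]
      field_simp
    · intro k
      have := (hcol k).le
      simp_rw [mul_assoc, ← Finset.mul_sum]
      rw [div_mul_eq_mul_div, div_le_one hpos]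
      exact this
  · left
    rw [Set.not_disjoint_iff] at hdis
    obtain ⟨_, ⟨f, hf, rfl⟩, hz⟩ := hdis
    refine ⟨fun k => V * f k, fun k => mul_nonneg hV.le (hf.1 k), ?_, fun p => ?_⟩
    · rw [← Finset.mul_sum, hf.2, mul_one]
    · rw [← Finset.mul_sum, ← hT]
      exact hz p

/-- All triples of distinct vertices whose blocks of length `L` are prescribed by `p` lie
in `H`. -/
def IsFullPattern {n : ℕ} (H : Finset (Finset (Fin n))) (L : ℕ) (p : Fin 3 → ℕ) : Prop :=
  ∀ v : Fin 3 → Fin n, Function.Injective v → (∀ j, (v j : ℕ) / L = p j) → Finset.univ.image v ∈ H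

lemma exists_matching_of_patterns {n K L : ℕ} {H : Finset (Finset (Fin n))} (hL : 0 < L)
    (hKL : K * L ≤ n) {π : Type*} [Fintype π] (inc : π → Fin 3 → Fin K)
    (hfull : ∀ p, IsFullPattern H L fun j => inc p j) (N : π → ℕ)
    (hcap : ∀ k, ∑ p, N p * (Finset.univ.filter fun j => inc p j = k).card ≤ L) :
    ∃ M ⊆ H, (M : Set (Finset (Fin n))).Pairwise (fun a b => Disjoint a b) ∧
      M.card = ∑ p, N p := by
  classical
  have hemb : ∀ k : Fin K,
      Nonempty ({s : (Σ p, Fin (N p)) × Fin 3 // inc s.1.1 s.2 = k} ↪ Fin L) := by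
    intro k
    refine Function.Embedding.nonempty_of_card_le ?_
    rw [Fintype.card_fin, Fintype.card_subtype]
    refine le_trans (le_of_eq ?_) (hcap k)
    rw [Finset.card_filter, Fintype.sum_prod_type, Fintype.sum_sigma]
    refine Finset.sum_congr rfl fun p _ => ?_
    simp
  let E := fun k => (hemb k).some
  have hlt : ∀ (k : Fin K) (l : Fin L), (k : ℕ) * L + l < n := fun k l => by
    have : ((k : ℕ) + 1) * L ≤ K * L := Nat.mul_le_mul_right _ k.2
    have := l.2
    linarith [add_mul (k : ℕ) 1 L]
  let vert : (Σ p, Fin (N p)) × Fin 3 → Fin n := fun s =>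
    ⟨(inc s.1.1 s.2 : ℕ) * L + E _ ⟨s, rfl⟩, hlt _ _⟩
  have hblock : ∀ s, (vert s : ℕ) / L = inc s.1.1 s.2 := fun s => by
    simp only [vert]
    rw [mul_comm, Nat.mul_add_div hL, Nat.div_eq_of_lt (Fin.is_lt _), add_zero]
  have hinj : Function.Injective vert := by
    intro s t hst
    have hk : inc s.1.1 s.2 = inc t.1.1 t.2 := by
      rw [← Fin.val_inj, ← hblock, ← hblock, hst]
    have hval : ∀ (k : Fin K) (hs : inc s.1.1 s.2 = k) (ht : inc t.1.1 t.2 = k),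
        (E k ⟨s, hs⟩ : ℕ) = E k ⟨t, ht⟩ := by
      intro k hs ht
      have h := congrArg Fin.val hst
      simp only [vert] at h
      subst ht
      have e : ∀ k' (h' : inc s.1.1 s.2 = k'), (E _ ⟨s, rfl⟩ : ℕ) = E k' ⟨s, h'⟩ := by
        rintro k' rfl; rfl
      rw [e _ hs, hk] at h
      exact Nat.add_left_cancel h
    have := (E _).injective (Fin.ext (hval _ hk rfl))
    exact congrArg Subtype.val this
  let edge : (Σ p, Fin (N p)) → Finset (Fin n) := fun i => Finset.univ.image fun j => vert (i, j)
  have hdisj : ∀ i i', i ≠ i' → Disjoint (edge i) (edge i') := by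
    intro i i' hne
    rw [Finset.disjoint_left]
    rintro x hx hx'
    obtain ⟨j, -, rfl⟩ := Finset.mem_image.1 hx
    obtain ⟨j', -, h⟩ := Finset.mem_image.1 hx'
    exact hne (congrArg Prod.fst (hinj h)).symm
  have hedge : Function.Injective edge := by
    intro i i' h
    by_contra hne
    have hd := hdisj i i' hne
    rw [← h, disjoint_self] at hd
    have : vert (i, 0) ∈ edge i := Finset.mem_image_of_mem _ (Finset.mem_univ _)
    simp [hd] at this
  refine ⟨Finset.univ.image edge, ?_, ?_, ?_⟩
  · intro e he
    obtain ⟨i, -, rfl⟩ := Finset.mem_image.1 he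
    exact hfull i.1 _ (fun j j' h => congrArg Prod.snd (hinj h)) fun j => hblock _
  · intro a ha b hb hab
    obtain ⟨i, -, rfl⟩ := Finset.mem_image.1 (Finset.mem_coe.1 ha)
    obtain ⟨i', -, rfl⟩ := Finset.mem_image.1 (Finset.mem_coe.1 hb)
    exact hdisj i i' fun h => hab (by rw [h])
  · rw [Finset.card_image_of_injective _ hedge]
    simp

lemma sum_range_mul_div (G : ℕ → ℝ) (A : ℕ) {L : ℕ} (hL : 0 < L) :
    ∑ i ∈ Finset.range (A * L), G (i / L) = L * ∑ k ∈ Finset.range A, G k := by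
  induction A with
  | zero => simp
  | succ A ih =>
    rw [Nat.succ_mul, Finset.sum_range_add, ih, Finset.sum_range_succ, mul_add]
    congr 1
    rw [Finset.sum_congr rfl (g := fun _ => G A)]
    · simp
    · intro i hi
      rw [mul_comm, Nat.mul_add_div hL, Nat.div_eq_of_lt (Finset.mem_range.1 hi), add_zero]

lemma StableThreeGraph.isFullPattern {n L : ℕ} {H : Finset (Finset (Fin n))}
    (hH : StableThreeGraph H) {e : Finset (Fin n)} (he : e.card = 3) (heH : e ∈ H)
    (hpos : ∀ v ∈ e, (v : ℕ) / L ≠ 0) :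
    IsFullPattern H L fun j => ((e.orderIsoOfFin he j : Fin n) : ℕ) / L - 1 := by
  intro v hv hblock
  refine hH.image_mem he heH hv fun j => ?_
  have h := hpos _ (e.orderIsoOfFin he j).2
  refine (Nat.lt_of_div_lt_div (c := L) ?_).le
  rw [hblock j]
  exact Nat.sub_lt (Nat.pos_of_ne_zero h) one_pos

/-- A stable 3-graph without a matching of size `n / 4` has an almost optimal fractional
vertex cover. -/
lemma StableThreeGraph.exists_small_cover {ε : ℝ} (hε : 0 < ε) :
    ∃ n₀ : ℕ, ∀ n : ℕ, n₀ ≤ n → ∀ H : Finset (Finset (Fin n)), (∀ e ∈ H, e.card = 3) →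
      StableThreeGraph H →
      (∀ M ⊆ H, (M : Set (Finset (Fin n))).Pairwise (fun a b => Disjoint a b) →
        M.card < n / 4) →
      ∃ g : Fin n → ℝ, (∀ v, 0 ≤ g v) ∧ (∀ v, g v ≤ 1) ∧ (∀ e ∈ H, 1 ≤ ∑ v ∈ e, g v) ∧
        ∑ v, g v ≤ n / 4 + ε * n := by
  classical
  obtain ⟨K, hK⟩ := exists_nat_gt (3 / ε)
  have hK0 : 0 < K := by
    have : (0 : ℝ) < K := lt_trans (by positivity) hK
    exact_mod_cast this
  refine ⟨K * K ^ 3, fun n hn H hcard hH hM => ?_⟩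
  obtain ⟨L, hLdef⟩ : ∃ L, L = n / K := ⟨_, rfl⟩
  have hLK : K ^ 3 ≤ L := by
    rw [hLdef, Nat.le_div_iff_mul_le hK0]; linarith
  have hL : 0 < L := lt_of_lt_of_le (by positivity) hLK
  have hKL : K * L ≤ n := by rw [hLdef]; exact Nat.mul_div_le n K
  have hnlt : n < (K + 1) * L := by
    have h1 : n < K * (L + 1) := by rw [hLdef]; exact Nat.lt_mul_div_succ n hK0
    have h2 : K ≤ L := le_trans (Nat.le_self_pow (by norm_num) K) hLK
    linarith [add_mul K 1 L]
  have : Nonempty (Fin K) := ⟨⟨0, hK0⟩⟩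
  have hV : (0 : ℝ) < K / 4 + 2 := by positivity
  have hLKr : (K : ℝ) ^ 3 ≤ L := by exact_mod_cast hLK
  have hnltr : (n : ℝ) < (K + 1) * L := by exact_mod_cast hnlt
  have hKLr : (K : ℝ) * L ≤ n := by exact_mod_cast hKL
  rcases exists_cover_or_fractional_matching
      (fun p : {p : Fin 3 → Fin K // IsFullPattern H L fun j => p j} => p.1) hV with
    ⟨f, hf0, hfsum, hcov⟩ | ⟨y, hy0, hysum, hycol⟩
  · obtain ⟨G, hG⟩ : ∃ G : ℕ → ℝ, G = fun k =>
        if k = 0 then 1 else if h : k - 1 < K then f ⟨k - 1, h⟩ else 0 := ⟨_, rfl⟩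
    have hG0 : ∀ k, 0 ≤ G k := by
      intro k
      rw [hG]
      dsimp only
      split_ifs
      · exact zero_le_one
      · exact hf0 _
      · exact le_rfl
    have hg0 : ∀ v : Fin n, 0 ≤ min 1 (G (v / L)) := fun v => le_min zero_le_one (hG0 _)
    refine ⟨fun v => min 1 (G (v / L)), hg0, fun v => min_le_left _ _, ?_, ?_⟩
    · intro e he
      by_cases hbig : ∃ v ∈ e, 1 ≤ G ((v : ℕ) / L)
      · obtain ⟨v, hv, hv1⟩ := hbig
        calc (1 : ℝ) = min 1 (G (v / L)) := (min_eq_left hv1).symm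
          _ ≤ _ := Finset.single_le_sum (f := fun v : Fin n => min 1 (G ((v : ℕ) / L)))
            (fun v _ => hg0 v) hv
      · push Not at hbig
        have hpos : ∀ v ∈ e, (v : ℕ) / L ≠ 0 := by
          intro v hv h0
          have := hbig v hv
          simp [h0, hG] at this
        have hlt : ∀ v ∈ e, (v : ℕ) / L - 1 < K := by
          intro v hv
          have h1 : (v : ℕ) / L < K + 1 := by
            rw [Nat.div_lt_iff_lt_mul hL]; exact v.2.trans hnlt
          have := hpos v hv
          omega
        have hc := hcard e he
        have hp := hcov ⟨fun j => ⟨_, hlt _ (e.orderIsoOfFin hc j).2⟩, hH.isFullPattern hc he hpos⟩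
        refine hp.trans (le_of_eq ?_)
        rw [← Finset.sum_coe_sort e, ← (e.orderIsoOfFin hc).toEquiv.sum_comp]
        refine Finset.sum_congr rfl fun j _ => ?_
        have hmem := (e.orderIsoOfFin hc j).2
        simp only [RelIso.coe_fn_toEquiv]
        rw [min_eq_right (hbig _ hmem).le, hG]
        simp only [hpos _ hmem, hlt _ hmem, if_false, dif_pos]
    · have h1 : ∑ v : Fin n, min 1 (G (v / L)) ≤ ∑ v ∈ Finset.range ((K + 1) * L), G (v / L) := by
        calc ∑ v : Fin n, min 1 (G (v / L)) ≤ ∑ v : Fin n, G (v / L) :=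
              Finset.sum_le_sum fun v _ => min_le_right _ _
          _ = ∑ v ∈ Finset.range n, G (v / L) := Fin.sum_univ_eq_sum_range (fun v => G (v / L)) n
          _ ≤ _ := Finset.sum_le_sum_of_subset_of_nonneg
              (Finset.range_subset_range.2 hnlt.le) fun _ _ _ => hG0 _
      have h2 : ∑ k ∈ Finset.range (K + 1), G k = K / 4 + 3 := by
        rw [Finset.sum_range_succ', ← Fin.sum_univ_eq_sum_range (fun k => G (k + 1)) K]
        have : ∀ k : Fin K, G (k + 1) = f k := fun k => by simp [hG]
        simp_rw [this, hfsum]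
        simp [hG]
        ring
      rw [sum_range_mul_div G _ hL, h2] at h1
      have h3 : 3 ≤ ε * K := by
        rw [div_lt_iff₀ hε] at hK
        linarith
      have h4 : 3 * (L : ℝ) ≤ ε * n := by
        calc 3 * (L : ℝ) ≤ ε * K * L := mul_le_mul_of_nonneg_right h3 (Nat.cast_nonneg _)
          _ = ε * (K * L) := by ring
          _ ≤ ε * n := mul_le_mul_of_nonneg_left hKLr hε.le
      linarith
  · exfalso
    obtain ⟨M, hMH, hMd, hMc⟩ := exists_matching_of_patterns hL hKL
      (fun p : {p : Fin 3 → Fin K // IsFullPattern H L fun j => p j} => p.1) (fun p => p.2)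
      (fun p => ⌊(L : ℝ) * y p⌋₊) (by
        intro k
        have : ∑ p, ((⌊(L : ℝ) * y p⌋₊ : ℕ) : ℝ) * (Finset.univ.filter fun j => p.1 j = k).card
            ≤ L := by
          calc _ ≤ ∑ p, (L : ℝ) * (y p * (Finset.univ.filter fun j => p.1 j = k).card) := by
                refine Finset.sum_le_sum fun p _ => ?_
                rw [← mul_assoc]
                exact mul_le_mul_of_nonneg_right
                  (Nat.floor_le (mul_nonneg (Nat.cast_nonneg _) (hy0 p))) (Nat.cast_nonneg _)
            _ ≤ L * 1 := by
                rw [← Finset.mul_sum]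
                exact mul_le_mul_of_nonneg_left (hycol k) (Nat.cast_nonneg _)
            _ = L := mul_one _
        exact_mod_cast this)
    have hlt := hM M hMH hMd
    have hlt' : (M.card : ℝ) < n / 4 := by
      have h1 : (M.card : ℝ) < ((n / 4 : ℕ) : ℝ) := by exact_mod_cast hlt
      exact h1.trans_le (by simpa using Nat.cast_div_le (α := ℝ) (m := n) (n := 4))
    rw [hMc, Nat.cast_sum] at hlt'
    have hlow : (L : ℝ) * (K / 4 + 2) - K ^ 3
        ≤ ∑ p : {p : Fin 3 → Fin K // IsFullPattern H L fun j => p j},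
          ((⌊(L : ℝ) * y p⌋₊ : ℕ) : ℝ) := by
      calc (L : ℝ) * (K / 4 + 2) - K ^ 3
          ≤ L * ∑ p, y p
            - Fintype.card {p : Fin 3 → Fin K // IsFullPattern H L fun j => p j} := by
            rw [hysum]
            have : Fintype.card {p : Fin 3 → Fin K // IsFullPattern H L fun j => p j} ≤ K ^ 3 :=
              (Fintype.card_subtype_le _).trans (by simp)
            have : (Fintype.card {p : Fin 3 → Fin K // IsFullPattern H L fun j => p j} : ℝ)
              ≤ K ^ 3 := by exact_mod_cast this
            linarith
        _ = ∑ p, (L * y p - 1) := by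
            rw [Finset.sum_sub_distrib, Finset.mul_sum]; simp
        _ ≤ _ := Finset.sum_le_sum fun p _ => (Nat.sub_one_lt_floor _).le
    nlinarith

lemma six_mul_le_sum_ordered_triples {α : Type*} [Fintype α] [DecidableEq α] {e : Finset α}
    (he : e.card = 3) {w : α × α × α → ℝ} {c : ℝ} (hc : 0 ≤ c)
    (hw : ∀ t : α × α × α, ({t.1, t.2.1, t.2.2} : Finset α) = e → c ≤ w t) :
    6 * c ≤ ∑ t : α × α × α with ({t.1, t.2.1, t.2.2} : Finset α) = e, w t := by
  obtain ⟨x, y, z, hxy, hxz, hyz, rfl⟩ := Finset.card_eq_three.1 he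
  have hsub : ({(x, y, z), (x, z, y), (y, x, z), (y, z, x), (z, x, y), (z, y, x)} :
      Finset (α × α × α)) ⊆
      Finset.univ.filter fun t => ({t.1, t.2.1, t.2.2} : Finset α) = {x, y, z} := by
    intro t ht
    simp only [Finset.mem_insert, Finset.mem_singleton] at ht
    rw [Finset.mem_filter]
    refine ⟨Finset.mem_univ _, ?_⟩
    rcases ht with rfl | rfl | rfl | rfl | rfl | rfl <;> ext a <;>
      simp only [Finset.mem_insert, Finset.mem_singleton] <;> tauto
  have hcard : ({(x, y, z), (x, z, y), (y, x, z), (y, z, x), (z, x, y), (z, y, x)} :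
      Finset (α × α × α)).card = 6 := by
    simp [Finset.card_insert_of_notMem, hxy, hxz, hyz, hxy.symm, hxz.symm, hyz.symm]
  have hle := Finset.card_le_card hsub
  rw [hcard] at hle
  calc 6 * c ≤ (Finset.univ.filter fun t : α × α × α =>
        ({t.1, t.2.1, t.2.2} : Finset α) = {x, y, z}).card * c :=
        mul_le_mul_of_nonneg_right (by exact_mod_cast hle) hc
    _ = ∑ t : α × α × α with ({t.1, t.2.1, t.2.2} : Finset α) = {x, y, z}, c := by simp
    _ ≤ _ := Finset.sum_le_sum fun t ht => hw t (Finset.mem_filter.1 ht).2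

/-- A 3-graph with a fractional cover `g` of weight `(n + r) / 4` has about as many edges as
`H₃^*(n, n/4)` at most, and edges all of whose vertices have `g < τ` count with a bonus. -/
lemma card_edges_le_of_cover {n r : ℕ} {H : Finset (Finset (Fin n))} (hcard : ∀ e ∈ H, e.card = 3)
    {g : Fin n → ℝ} (hg0 : ∀ v, 0 ≤ g v) (hg1 : ∀ v, g v ≤ 1)
    (hcov : ∀ e ∈ H, 1 ≤ ∑ v ∈ e, g v) (hsum : ∑ v, g v ≤ (n + r : ℝ) / 4)
    {τ : ℝ} (hτ0 : 7 / 20 ≤ τ) (hτ : τ ≤ 1) :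
    6 * (H.card : ℝ) + 6 * ((1 - τ) / 16 * ((H.filter fun e => ∀ v ∈ e, g v < τ).card : ℝ))
      ≤ 37 / 64 * (n + r : ℝ) ^ 3 := by
  classical
  have key := sum_tripleWeight_le (ι := Fin n ⊕ Fin r) (f := Sum.elim g 0) hτ0 hτ
    (by rintro (v | v) <;> simp [hg0]) (by rintro (v | v) <;> simp [hg1])
    (by simpa using hsum)
  have hrestrict : ∑ t : Fin n × Fin n × Fin n, tripleWeight τ (g t.1) (g t.2.1) (g t.2.2)
      ≤ ∑ i, ∑ j, ∑ k, tripleWeight τ ((Sum.elim g 0 : Fin n ⊕ Fin r → ℝ) i)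
        ((Sum.elim g 0 : Fin n ⊕ Fin r → ℝ) j) ((Sum.elim g 0 : Fin n ⊕ Fin r → ℝ) k) := by
    simp only [Fintype.sum_prod_type, Fintype.sum_sum_type, Sum.elim_inl]
    refine le_add_of_le_of_nonneg (Finset.sum_le_sum fun i _ => ?_)
      (Finset.sum_nonneg fun _ _ => add_nonneg (Finset.sum_nonneg fun _ _ => add_nonneg ?_ ?_)
        (Finset.sum_nonneg fun _ _ => add_nonneg ?_ ?_))
    · refine le_add_of_le_of_nonneg (Finset.sum_le_sum fun j _ => ?_)
        (Finset.sum_nonneg fun _ _ => add_nonneg ?_ ?_)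
      · exact le_add_of_nonneg_right (Finset.sum_nonneg fun _ _ => tripleWeight_nonneg hτ)
      all_goals exact Finset.sum_nonneg fun _ _ => tripleWeight_nonneg hτ
    all_goals exact Finset.sum_nonneg fun _ _ => tripleWeight_nonneg hτ
  have hedge : ∀ e ∈ H, 6 * (1 + if ∀ v ∈ e, g v < τ then (1 - τ) / 16 else 0)
      ≤ ∑ t : Fin n × Fin n × Fin n with ({t.1, t.2.1, t.2.2} : Finset (Fin n)) = e,
        tripleWeight τ (g t.1) (g t.2.1) (g t.2.2) := by
    intro e he
    refine six_mul_le_sum_ordered_triples (hcard e he) (by split_ifs <;> linarith) ?_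
    rintro ⟨x, y, z⟩ rfl
    have h3 := hcard _ he
    have h1 := hcov _ he
    have hyz : y ≠ z := by
      rintro rfl
      simp only [Finset.pair_eq_singleton] at h3
      exact absurd (h3 ▸ Finset.card_le_two) (by norm_num)
    have hx : x ∉ ({y, z} : Finset (Fin n)) := by
      intro hx
      simp only [Finset.insert_eq_of_mem hx] at h3
      exact absurd (h3 ▸ Finset.card_le_two) (by norm_num)
    rw [Finset.sum_insert hx, Finset.sum_pair hyz, ← add_assoc] at h1
    simp only [tripleWeight, if_pos h1, Finset.forall_mem_insert, Finset.mem_singleton, forall_eq]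
    split_ifs <;> linarith
  calc _ = ∑ e ∈ H, 6 * (1 + if ∀ v ∈ e, g v < τ then (1 - τ) / 16 else 0) := by
        rw [← Finset.mul_sum, Finset.sum_add_distrib, ← Finset.sum_filter]
        simp
        ring
    _ ≤ _ := Finset.sum_le_sum hedge
    _ ≤ ∑ t : Fin n × Fin n × Fin n, tripleWeight τ (g t.1) (g t.2.1) (g t.2.2) :=
        Finset.sum_fiberwise_le_sum_of_sum_fiber_nonneg fun _ _ =>
          Finset.sum_nonneg fun _ _ => tripleWeight_nonneg hτ
    _ ≤ _ := hrestrict.trans (by simpa using key)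

lemma card_H3Star_add_choose_le {n m : ℕ} (hm : m ≤ n) :
    (H3Star n (m - 1)).card + (n - m).choose 3 ≤ n.choose 3 := by
  classical
  have hcard : (Finset.univ.filter fun v : Fin n => m ≤ (v : ℕ)).card = n - m := by
    have h := Finset.card_filter_add_card_filter_not (s := (Finset.univ : Finset (Fin n)))
      (fun v : Fin n => (v : ℕ) < m)
    simp only [not_lt, Finset.card_univ, Fintype.card_fin] at h
    rw [Fin.card_filter_val_lt, min_eq_right hm] at h
    omega
  have hdis : Disjoint (H3Star n (m - 1))
      (Finset.powersetCard 3 (Finset.univ.filter fun v : Fin n => m ≤ (v : ℕ))) := by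
    rw [Finset.disjoint_left]
    intro e he he'
    obtain ⟨-, v, hv, hlt⟩ := Finset.mem_filter.1 he
    have := (Finset.mem_filter.1 ((Finset.mem_powersetCard.1 he').1 hv)).2
    omega
  rw [← hcard, ← Finset.card_powersetCard, ← Finset.card_union_of_disjoint hdis]
  calc _ ≤ (Finset.powersetCard 3 (Finset.univ : Finset (Fin n))).card :=
        Finset.card_le_card (Finset.union_subset (Finset.filter_subset _ _)
          (Finset.powersetCard_mono (Finset.subset_univ _)))
    _ = n.choose 3 := by simp

lemma card_triples_meeting_le {n : ℕ} {S : Finset (Finset (Fin n))} (hS : ∀ e ∈ S, e.card = 3)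
    {Q : Finset (Fin n)} (hQ : ∀ e ∈ S, ∃ v ∈ Q, v ∈ e) : S.card ≤ Q.card * n ^ 2 := by
  classical
  calc S.card ≤ ((Q ×ˢ (Finset.univ : Finset (Fin n × Fin n))).image
        fun t => ({t.1, t.2.1, t.2.2} : Finset (Fin n))).card := by
        refine Finset.card_le_card fun e he => ?_
        obtain ⟨v, hvQ, hve⟩ := hQ e he
        obtain ⟨x, y, -, hxy⟩ := Finset.card_eq_two.1
          (show (e.erase v).card = 2 by rw [Finset.card_erase_of_mem hve, hS e he])
        refine Finset.mem_image.2 ⟨(v, x, y), by simp [hvQ], ?_⟩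
        rw [← hxy, Finset.insert_erase hve]
    _ ≤ _ := Finset.card_image_le
    _ = Q.card * n ^ 2 := by simp [pow_two]

lemma card_high_vertices_le {n k : ℕ} (hk : k ≤ n) {g : Fin n → ℝ} (hg0 : ∀ v, 0 ≤ g v)
    (hanti : Antitone g) {τ : ℝ} (hτ : 0 ≤ τ) {s : ℝ} (hs : τ * k ≤ s) (hsum : ∑ v, g v ≤ s) :
    τ * (k + (Finset.univ.filter fun v : Fin n => k ≤ (v : ℕ) ∧ τ ≤ g v).card) ≤ s := by
  classical
  rcases (Finset.univ.filter fun v : Fin n => k ≤ (v : ℕ) ∧ τ ≤ g v).eq_empty_or_nonempty with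
    h | ⟨v, hv⟩
  · simpa [h] using hs
  · obtain ⟨-, hkv, hτv⟩ := Finset.mem_filter.1 hv
    have hsub : (Finset.univ.filter fun u : Fin n => (u : ℕ) < k)
        ∪ (Finset.univ.filter fun v : Fin n => k ≤ (v : ℕ) ∧ τ ≤ g v)
        ⊆ Finset.univ.filter fun u : Fin n => τ ≤ g u := by
      intro u hu
      rw [Finset.mem_union, Finset.mem_filter, Finset.mem_filter] at hu
      rw [Finset.mem_filter]
      rcases hu with ⟨-, hu⟩ | ⟨-, -, hu⟩
      · exact ⟨Finset.mem_univ _, hτv.trans (hanti (Fin.le_def.2 (by omega)))⟩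
      · exact ⟨Finset.mem_univ _, hu⟩
    have hcard := Finset.card_le_card hsub
    rw [Finset.card_union_of_disjoint, Fin.card_filter_val_lt, min_eq_right hk] at hcard
    · calc _ ≤ τ * (Finset.univ.filter fun u : Fin n => τ ≤ g u).card :=
            mul_le_mul_of_nonneg_left (by exact_mod_cast hcard) hτ
        _ = ∑ u with τ ≤ g u, τ := by simp [mul_comm]
        _ ≤ ∑ u with τ ≤ g u, g u := Finset.sum_le_sum fun u hu => (Finset.mem_filter.1 hu).2
        _ ≤ ∑ u, g u := Finset.sum_le_sum_of_subset_of_nonneg (Finset.filter_subset _ _)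
            fun u _ _ => hg0 u
        _ ≤ s := hsum
    · rw [Finset.disjoint_left]
      intro u hu hu'
      have h1 := (Finset.mem_filter.1 hu).2
      have h2 := (Finset.mem_filter.1 hu').2.1
      omega

lemma bonus_edges_bound {η N R h a : ℝ} (hη : 0 < η) (hη1 : η ≤ 1) (hN : 32 ≤ η ^ 4 * N)
    (hR0 : 0 ≤ R) (hR : R ≤ 4 * (η ^ 4 / 40 * N) + 1)
    (hup : 6 * h + 6 * (η / 16 * a) ≤ 37 / 64 * (N + R) ^ 3)
    (hlow : N ^ 3 - 6 * N ^ 2 - 27 / 64 * N ^ 3 - 6 * η ^ 4 * N ^ 3 ≤ 6 * h) :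
    a ≤ 56 / 3 * η ^ 3 * N ^ 3 := by
  have hη4 : 0 < η ^ 4 := by positivity
  have hN0 : 0 < N := by
    by_contra hneg
    nlinarith
  obtain ⟨δ, hδ⟩ : ∃ δ, δ = η ^ 4 * (21 / 160) := ⟨_, rfl⟩
  have hη41 : η ^ 4 ≤ 1 := pow_le_one₀ hη.le hη1
  have hRδ : R ≤ δ * N := by rw [hδ]; linarith
  have hδ0 : 0 ≤ δ := by rw [hδ]; positivity
  have hδ1 : δ ≤ 1 := by rw [hδ]; linarith
  have hcube : (N + R) ^ 3 ≤ (1 + 7 * δ) * N ^ 3 := by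
    calc (N + R) ^ 3 ≤ (N + δ * N) ^ 3 := by gcongr
      _ = (1 + δ) ^ 3 * N ^ 3 := by ring
      _ ≤ (1 + 7 * δ) * N ^ 3 := by
        gcongr
        nlinarith [mul_nonneg hδ0 (sub_nonneg.2 hδ1),
          mul_nonneg (mul_nonneg hδ0 hδ0) (sub_nonneg.2 hδ1)]
  have hsq : 32 * N ^ 2 ≤ η ^ 4 * N ^ 3 := by
    calc 32 * N ^ 2 ≤ η ^ 4 * N * N ^ 2 := by gcongr
      _ = _ := by ring
  have hN3 : 0 ≤ η ^ 4 * N ^ 3 := by positivity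
  have hmul : η * a ≤ η * (56 / 3 * η ^ 3 * N ^ 3) := by
    rw [hδ] at hcube
    nlinarith
  exact le_of_mul_le_mul_left hmul hη

lemma closeness_numerics {η N q d : ℝ} (hη : 0 < η) (hη6 : η ≤ 1 / 6) (hN : 32 ≤ η ^ 4 * N)
    (hq : (1 - η) * (N / 4 - 1 + q) ≤ N / 4 + η ^ 4 / 40 * N)
    (hd : d < η ^ 4 * N ^ 3 + 56 / 3 * η ^ 3 * N ^ 3 + q * N ^ 2) : d < η * N ^ 3 := by
  have hη3 : η ^ 3 ≤ η / 36 := by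
    nlinarith [mul_nonneg hη.le (mul_nonneg (sub_nonneg.2 hη6) (by linarith : 0 ≤ 1 / 6 + η))]
  have hη4 : η ^ 4 ≤ η / 216 := by
    have : η ^ 4 = η ^ 3 * η := by ring
    nlinarith [mul_le_mul_of_nonneg_left hη6 (by positivity : 0 ≤ η ^ 3)]
  have hN0 : 0 < N := by
    by_contra hneg
    have : 0 < η ^ 4 := by positivity
    nlinarith
  have hone : 32 ≤ η / 216 * N := hN.trans (mul_le_mul_of_nonneg_right hη4 hN0.le)
  have hη4N : η ^ 4 * N ≤ η / 216 * N := mul_le_mul_of_nonneg_right hη4 hN0.le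
  have hqN : q ≤ 2 / 5 * η * N := by
    by_contra hneg
    push Not at hneg
    have hqpos : 0 ≤ q := le_trans (by positivity) hneg.le
    have h1 : 5 / 6 * q ≤ (1 - η) * q := mul_le_mul_of_nonneg_right (by linarith) hqpos
    nlinarith
  have hN3 : 0 < η * N ^ 3 := by positivity
  have h1 : η ^ 4 * N ^ 3 ≤ η / 216 * N ^ 3 := by gcongr
  have h2 : η ^ 3 * N ^ 3 ≤ η / 36 * N ^ 3 := by gcongr
  have h3 : q * N ^ 2 ≤ 2 / 5 * η * N ^ 3 := by
    calc q * N ^ 2 ≤ 2 / 5 * η * N * N ^ 2 := by gcongr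
      _ = _ := by ring
  nlinarith

lemma cube_sub_le_six_mul_choose {n : ℕ} (hn : 2 ≤ n) :
    (n : ℝ) ^ 3 - 6 * (n : ℝ) ^ 2 ≤ 6 * (n.choose 3 : ℝ) := by
  have h := Nat.pow_le_choose (α := ℝ) 3 n
  have hcast : ((n + 1 - 3 : ℕ) : ℝ) = n - 2 := by
    rw [Nat.add_sub_add_right, Nat.cast_sub hn, Nat.cast_ofNat]
  have hn' : (2 : ℝ) ≤ n := by exact_mod_cast hn
  rw [hcast, div_le_iff₀ (by positivity)] at h
  norm_num [Nat.factorial] at h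
  nlinarith

lemma six_mul_choose_le_cube (n : ℕ) : 6 * (n.choose 3 : ℝ) ≤ (n : ℝ) ^ 3 := by
  have h := Nat.choose_le_pow_div (α := ℝ) 3 n
  norm_num [Nat.factorial] at h
  linarith

/-- A 3-graph with a small fractional vertex cover that is nonincreasing along `[n]` is close to
`H₃^*(n, n/4 - 1)`, provided it has nearly as many edges. -/
lemma card_H3Star_sdiff_lt_of_antitone_cover {η : ℝ} (hη : 0 < η) (hη6 : η ≤ 1 / 6) {n : ℕ}
    (hn : 32 ≤ η ^ 4 * (n : ℝ)) (h4 : 4 ∣ n) {H : Finset (Finset (Fin n))}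
    (hcard : ∀ e ∈ H, e.card = 3)
    (hedges : (Nat.choose n 3 : ℝ) - (Nat.choose (3 * n / 4) 3 : ℝ) - η ^ 4 * (n : ℝ) ^ 3
      < (H.card : ℝ))
    {g : Fin n → ℝ} (hg0 : ∀ v, 0 ≤ g v) (hg1 : ∀ v, g v ≤ 1) (hanti : Antitone g)
    (hcov : ∀ e ∈ H, 1 ≤ ∑ v ∈ e, g v) (hsum : ∑ v, g v ≤ n / 4 + η ^ 4 / 40 * n) :
    ((H3Star n (n / 4 - 1) \ H).card : ℝ) < η * (n : ℝ) ^ 3 := by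
  classical
  obtain ⟨m, rfl⟩ := h4
  have hη4 : η ^ 4 ≤ 1 := pow_le_one₀ hη.le (by linarith)
  have hm : 1 ≤ m := by
    by_contra h0
    obtain rfl : m = 0 := by omega
    norm_num at hn
  have hdiv : 4 * m / 4 = m := by omega
  have hdiv' : 3 * (4 * m) / 4 = 3 * m := by omega
  rw [hdiv'] at hedges
  rw [hdiv]
  obtain ⟨N, hNdef⟩ : ∃ N : ℝ, N = ((4 * m : ℕ) : ℝ) := ⟨_, rfl⟩
  have hNm : N = 4 * m := by rw [hNdef]; push_cast; ring
  rw [← hNdef] at hn hedges hsum ⊢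
  have hN0 : 0 ≤ N := by rw [hNdef]; positivity
  obtain ⟨r, hr⟩ : ∃ r, r = ⌈4 * (η ^ 4 / 40 * N)⌉₊ := ⟨_, rfl⟩
  have hrle : 4 * (η ^ 4 / 40 * N) ≤ r := by rw [hr]; exact Nat.le_ceil _
  have hrlt : (r : ℝ) < 4 * (η ^ 4 / 40 * N) + 1 := by
    rw [hr]; exact Nat.ceil_lt_add_one (by positivity)
  have hup := card_edges_le_of_cover (r := r) (τ := 1 - η) hcard hg0 hg1 hcov
    (by rw [← hNdef]; linarith) (by linarith) (by linarith)
  rw [← hNdef, sub_sub_cancel] at hup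
  have hlow := cube_sub_le_six_mul_choose (n := 4 * m) (by omega)
  have hlow' := six_mul_choose_le_cube (3 * m)
  rw [← hNdef] at hlow
  have h3m : ((3 * m : ℕ) : ℝ) = 3 / 4 * N := by rw [hNm]; push_cast; ring
  rw [h3m] at hlow'
  have hbonus := bonus_edges_bound hη (by linarith) hn (Nat.cast_nonneg r) hrlt.le hup
    (by nlinarith)
  have hhigh := card_high_vertices_le (k := m - 1) (by omega) hg0 hanti
    (τ := 1 - η) (s := N / 4 + η ^ 4 / 40 * N) (by linarith) (by
      rw [Nat.cast_sub hm, Nat.cast_one, hNm]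
      have : (1 : ℝ) ≤ m := by exact_mod_cast hm
      nlinarith [mul_nonneg hη.le (sub_nonneg.2 this),
        mul_nonneg (by positivity : 0 ≤ η ^ 4) (by linarith : (0 : ℝ) ≤ m)]) hsum
  obtain ⟨Q, hQ⟩ : ∃ Q, Q = Finset.univ.filter fun v : Fin (4 * m) =>
    m - 1 ≤ (v : ℕ) ∧ 1 - η ≤ g v := ⟨_, rfl⟩
  rw [← hQ, Nat.cast_sub hm, Nat.cast_one] at hhigh
  have hmeet := card_triples_meeting_le (Q := Q)
    (S := (H \ H3Star (4 * m) (m - 1)) \ H.filter fun e => ∀ v ∈ e, g v < 1 - η)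
    (fun e he => hcard e (Finset.mem_sdiff.1 (Finset.mem_sdiff.1 he).1).1) (by
      intro e he
      rw [Finset.mem_sdiff, Finset.mem_sdiff, Finset.mem_filter] at he
      obtain ⟨⟨heH, heS⟩, heb⟩ := he
      have : ∃ v ∈ e, 1 - η ≤ g v := by
        by_contra hno
        push Not at hno
        exact heb ⟨heH, hno⟩
      obtain ⟨v, hv, hgv⟩ := this
      refine ⟨v, ?_, hv⟩
      rw [hQ, Finset.mem_filter]
      refine ⟨Finset.mem_univ _, ?_, hgv⟩
      by_contra hlt
      exact heS (Finset.mem_filter.2 ⟨Finset.mem_powersetCard.2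
        ⟨Finset.subset_univ _, hcard e heH⟩, v, hv, not_le.1 hlt⟩))
  have hsplit := Finset.card_le_card_sdiff_add_card (s := H \ H3Star (4 * m) (m - 1))
    (t := H.filter fun e => ∀ v ∈ e, g v < 1 - η)
  have hstar := card_H3Star_add_choose_le (n := 4 * m) (m := m) (by omega)
  rw [show 4 * m - m = 3 * m by omega] at hstar
  have e1 := Finset.card_sdiff_add_card_inter (H3Star (4 * m) (m - 1)) H
  have e2 := Finset.card_sdiff_add_card_inter H (H3Star (4 * m) (m - 1))
  rw [Finset.inter_comm] at e2
  refine closeness_numerics hη hη6 hn (q := Q.card) (by rw [hNm] at *; linarith) ?_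
  have c1 : ((H3Star (4 * m) (m - 1) \ H).card : ℝ) + H.card + (3 * m).choose 3
      ≤ (4 * m).choose 3 + (Q.card * (4 * m) ^ 2 +
        (H.filter fun e => ∀ v ∈ e, g v < 1 - η).card) := by
    exact_mod_cast (by omega)
  rw [← hNm] at c1
  linarith

/-- Gao–Lu–Ma–Yu, special case: For every `η > 0` there is `n₀` such
that for every `n ≥ n₀` divisible by 4 and every stable 3-graph `H` on `[n]` with
`e(H) > C(n,3) - C(3n/4,3) - η⁴n³` and `ν(H) < n/4`, the graph `H` is `η`-close to
`H₃^*(n, n/4 - 1)`: some isomorphic copy `H'` of `H` on `[n]` (given by a vertex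
permutation) satisfies `|E(H₃^*(n, n/4-1)) \ E(H')| < η·n³`. -/
theorem stability_close_to_H3Star (η : ℝ) (hη : 0 < η) :
    ∃ n₀ : ℕ, ∀ n : ℕ, n₀ ≤ n → 4 ∣ n →
    ∀ H : Finset (Finset (Fin n)),
      (∀ e ∈ H, e.card = 3) →
      StableThreeGraph H →
      ((Nat.choose n 3 : ℝ) - (Nat.choose (3 * n / 4) 3 : ℝ) - η ^ 4 * (n : ℝ) ^ 3
        < (H.card : ℝ)) →
      (∀ M ⊆ H, (M : Set (Finset (Fin n))).Pairwise (fun a b => Disjoint a b) →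
        M.card < n / 4) →
      ∃ σ : Equiv.Perm (Fin n),
        (((H3Star n (n / 4 - 1)) \ (H.image (fun e => e.image σ))).card : ℝ)
          < η * (n : ℝ) ^ 3 := by
  rcases le_or_gt η (1 / 6) with hη6 | hη6
  · obtain ⟨n₁, hn₁⟩ := StableThreeGraph.exists_small_cover (ε := η ^ 4 / 40) (by positivity)
    obtain ⟨n₂, hn₂⟩ := exists_nat_ge (32 / η ^ 4)
    refine ⟨max n₁ n₂, fun n hn h4 H hcard hH hedges hM => ?_⟩
    obtain ⟨g, hg0, hg1, hcov, hsum⟩ := hn₁ n (le_of_max_le_left hn) H hcard hH hM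
    have hnr : 32 ≤ η ^ 4 * (n : ℝ) := by
      have h2 : (n₂ : ℝ) ≤ n := by exact_mod_cast le_of_max_le_right hn
      have := hn₂.trans h2
      rwa [div_le_iff₀' (by positivity)] at this
    obtain ⟨ρ, hρ⟩ : ∃ ρ : Equiv.Perm (Fin n), Antitone (g ∘ ρ) := by
      refine ⟨Tuple.sort fun v => -g v, fun u v huv => ?_⟩
      exact neg_le_neg_iff.1 (Tuple.monotone_sort (fun v => -g v) huv)
    have hinj : Function.Injective fun e : Finset (Fin n) => e.image ρ.symm :=
      Finset.image_injective ρ.symm.injective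
    refine ⟨ρ.symm, card_H3Star_sdiff_lt_of_antitone_cover hη hη6 hnr h4 (g := g ∘ ρ) ?_ ?_
      (fun v => hg0 _) (fun v => hg1 _) hρ ?_ ?_⟩
    · rw [Finset.forall_mem_image]
      intro e he
      rw [Finset.card_image_of_injective _ ρ.symm.injective, hcard e he]
    · rwa [Finset.card_image_of_injective _ hinj]
    · rw [Finset.forall_mem_image]
      intro e he
      rw [Finset.sum_image ρ.symm.injective.injOn]
      simpa using hcov e he
    · simpa [Equiv.sum_comp ρ g] using hsum
  · refine ⟨1, fun n hn _ H _ _ _ _ => ⟨1, ?_⟩⟩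
    have hle : (H3Star n (n / 4 - 1) \ H.image fun e => e.image (1 : Equiv.Perm (Fin n))).card
        ≤ n.choose 3 := by
      refine (Finset.card_le_card (Finset.sdiff_subset.trans (Finset.filter_subset _ _))).trans ?_
      simp
    have hn' : (0 : ℝ) < n := by exact_mod_cast hn
    calc _ ≤ (n.choose 3 : ℝ) := by exact_mod_cast hle
      _ ≤ 1 / 6 * (n : ℝ) ^ 3 := by linarith [six_mul_choose_le_cube n]
      _ < η * (n : ℝ) ^ 3 := by gcongr
end

section
/- For every ε > 0 there exist ρ > 0 with ρ ≪ ε and n_0 = n_0(ε) such that the following holds for every integer n ≥ n_0 with n ≡ 0 (mod 4): let H be a balanced (1,4)-partite 5-graph with partition classes X, [n] (|X| = n/4) such that d_H({x,v}) ≥ binom(n-1,3) - binom(3n/4,3) - 3ρn^3 for every x ∈ X and v ∈ [n]. If H contains no independent set S with |S ∩ X| ≥ n/4 - εn and |S ∩ [n]| ≥ 3n/4 - εn, then H has a fractional perfect matching. -/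
theorem two_atoms_pair_le {p₁ p₂ d₁ d₂ s : ℝ} (hp₁ : 0 ≤ p₁) (hp₁' : p₁ ≤ 1) (hp₂ : 0 ≤ p₂)
    (hp₂' : p₂ ≤ 1) (hd₁ : 0 ≤ d₁) (hd₂ : 0 ≤ d₂) (hs : 0 ≤ s) (hs1 : s ≤ 1) (h : 1 ≤ d₁ + d₂)
    (h₁ : 2 * (p₁ * d₁) + p₂ * d₂ ≤ s) (h₂ : p₁ * d₁ + 2 * (p₂ * d₂) ≤ s) :
    p₁ * p₂ ≤ s / 2 := by
  by_contra hc
  push Not at hc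
  have e1 : s < 2 * p₁ := by nlinarith
  have e2 : s < 2 * p₂ := by nlinarith
  have f1 : (2 * p₁ - s) * d₁ ≤ (s - p₂) * d₂ := by nlinarith
  have f2 : (2 * p₂ - s) * d₂ ≤ (s - p₁) * d₁ := by nlinarith
  have d1p : 0 < d₁ := by
    rcases hd₁.lt_or_eq with h0 | h0
    · exact h0
    · subst h0; nlinarith
  have d2p : 0 < d₂ := by
    rcases hd₂.lt_or_eq with h0 | h0
    · exact h0
    · subst h0; nlinarith
  have g1 : 0 < s - p₂ := by
    by_contra hh
    nlinarith [mul_pos (sub_pos.2 e1) d1p]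
  have key : (2 * p₁ - s) * (2 * p₂ - s) ≤ (s - p₂) * (s - p₁) := by
    have : ((2 * p₁ - s) * (2 * p₂ - s)) * (d₁ * d₂) ≤ ((s - p₂) * (s - p₁)) * (d₁ * d₂) := by
      have := mul_le_mul f1 f2 (mul_nonneg (by linarith) hd₂) (mul_nonneg g1.le hd₂)
      nlinarith
    exact le_of_mul_le_mul_right this (mul_pos d1p d2p)
  nlinarith [mul_nonneg (sub_nonneg.2 hp₁') (sub_nonneg.2 hp₂')]

theorem two_atoms_triple_le {p₁ p₂ p₃ d₁ d₂ d₃ : ℝ} (hp₁ : 0 ≤ p₁) (hp₁' : p₁ ≤ 1) (hp₂ : 0 ≤ p₂)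
    (hp₂' : p₂ ≤ 1) (hp₃ : 0 ≤ p₃) (hp₃' : p₃ ≤ 1)
    (h : 1 ≤ d₁ + d₂ + d₃)
    (h₁ : 2 * (p₁ * d₁) + p₂ * d₂ + p₃ * d₃ ≤ 1) (h₂ : p₁ * d₁ + 2 * (p₂ * d₂) + p₃ * d₃ ≤ 1)
    (h₃ : p₁ * d₁ + p₂ * d₂ + 2 * (p₃ * d₃) ≤ 1) :
    p₁ * p₂ * p₃ ≤ 1 / 2 := by
  by_contra hc
  push Not at hc
  have e1 : 0 < p₁ := by
    rcases hp₁.lt_or_eq with h0 | h0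
    · exact h0
    · subst h0; norm_num at hc
  have e2 : 0 < p₂ := by
    rcases hp₂.lt_or_eq with h0 | h0
    · exact h0
    · subst h0; norm_num at hc
  have e3 : 0 < p₃ := by
    rcases hp₃.lt_or_eq with h0 | h0
    · exact h0
    · subst h0; norm_num at hc
  obtain ⟨s, hs⟩ : ∃ s, s = 1 - (p₁ * d₁ + p₂ * d₂ + p₃ * d₃) := ⟨_, rfl⟩
  have b1 : d₁ ≤ s / p₁ := by rw [le_div_iff₀ e1]; linarith
  have b2 : d₂ ≤ s / p₂ := by rw [le_div_iff₀ e2]; linarith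
  have b3 : d₃ ≤ s / p₃ := by rw [le_div_iff₀ e3]; linarith
  have c1 : 1 ≤ 1 / p₁ := by rw [le_div_iff₀ e1]; linarith
  have c2 : 1 ≤ 1 / p₂ := by rw [le_div_iff₀ e2]; linarith
  have c3 : 1 ≤ 1 / p₃ := by rw [le_div_iff₀ e3]; linarith
  have hprod : 1 / p₁ * (1 / p₂) * (1 / p₃) < 2 := by
    have : 1 / (p₁ * p₂ * p₃) < 2 := by rw [div_lt_iff₀ (by positivity)]; linarith
    calc _ = 1 / (p₁ * p₂ * p₃) := by field_simp
      _ < 2 := this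
  have r1 : (1 - p₁) * d₁ ≤ s * (1 / p₁ - 1) := by
    calc _ ≤ (1 - p₁) * (s / p₁) := mul_le_mul_of_nonneg_left b1 (by linarith)
      _ = _ := by field_simp
  have r2 : (1 - p₂) * d₂ ≤ s * (1 / p₂ - 1) := by
    calc _ ≤ (1 - p₂) * (s / p₂) := mul_le_mul_of_nonneg_left b2 (by linarith)
      _ = _ := by field_simp
  have r3 : (1 - p₃) * d₃ ≤ s * (1 / p₃ - 1) := by
    calc _ ≤ (1 - p₃) * (s / p₃) := mul_le_mul_of_nonneg_left b3 (by linarith)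
      _ = _ := by field_simp
  generalize 1 / p₁ = x at *
  generalize 1 / p₂ = y at *
  generalize 1 / p₃ = z at *
  have hxyz : x + y + z < 4 := by
    nlinarith [mul_nonneg (sub_nonneg.2 c1) (sub_nonneg.2 c2),
      mul_nonneg (mul_nonneg (sub_nonneg.2 c1) (sub_nonneg.2 c2)) (sub_nonneg.2 c3),
      mul_nonneg (sub_nonneg.2 c1) (sub_nonneg.2 c3),
      mul_nonneg (sub_nonneg.2 c2) (sub_nonneg.2 c3)]
  have hs0 : 0 < s := by nlinarith
  nlinarith

theorem two_atoms_star_key {p₁ p₂ p₃ d₁ D : ℝ} (hp₁' : p₁ ≤ 1) (hp₁ : 1 / 2 ≤ p₁)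
    (hD : 0 < D) (h : d₁ + D = 1)
    (h₁ : 2 * (p₁ * d₁) + (p₂ + p₃) * D ≤ 1) (h₂ : p₁ * d₁ + (2 * p₂ + p₃) * D ≤ 1) :
    p₁ * (3 * p₂ + p₃ - 1) ≤ p₂ := by
  have a1 : (2 * p₂ + p₃ - 1) * D ≤ (1 - p₁) * d₁ := by nlinarith
  have a2 : (2 * p₁ - 1) * d₁ ≤ (1 - (p₂ + p₃)) * D := by nlinarith
  have : ((2 * p₁ - 1) * (2 * p₂ + p₃ - 1)) * D ≤ ((1 - p₁) * (1 - (p₂ + p₃))) * D := by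
    nlinarith [mul_le_mul_of_nonneg_left a1 (by linarith : 0 ≤ 2 * p₁ - 1),
      mul_le_mul_of_nonneg_left a2 (by linarith : 0 ≤ 1 - p₁)]
  have := le_of_mul_le_mul_right this hD
  nlinarith

theorem star_poly_le {p₁ p₂ p₃ : ℝ} (hp₁ : 0 ≤ p₁) (hp₁' : p₁ ≤ 1)
    (hp₂' : p₂ ≤ 1) (hp₃ : 0 ≤ p₃) (h23 : p₃ ≤ p₂)
    (h : p₁ * (3 * p₂ + p₃ - 1) ≤ p₂) : p₁ * (p₂ + p₃ - p₂ * p₃) ≤ 5 / 9 := by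
  by_cases hM : 2 * p₂ + p₃ ≤ 1
  · have : p₂ + p₃ - p₂ * p₃ ≤ 5 / 9 := by nlinarith
    have : 0 ≤ p₂ + p₃ - p₂ * p₃ := by nlinarith
    nlinarith
  · push Not at hM
    have hpos : 0 < 3 * p₂ + p₃ - 1 := by linarith
    have key : p₂ * (p₂ + p₃ - p₂ * p₃) ≤ 5 / 9 * (3 * p₂ + p₃ - 1) := by
      nlinarith [mul_nonneg (sub_nonneg.2 hp₂') (sub_nonneg.2 h23),
        mul_nonneg (sub_nonneg.2 hp₂') hp₃, sq_nonneg (p₂ - 1 / 3), sq_nonneg (p₃ - 1 / 3),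
        mul_nonneg (mul_nonneg (sub_nonneg.2 hp₂') hp₃) (sub_nonneg.2 h23)]
    have h0 : 0 ≤ p₂ + p₃ - p₂ * p₃ := by nlinarith
    have : (p₁ * (p₂ + p₃ - p₂ * p₃)) * (3 * p₂ + p₃ - 1) ≤ 5 / 9 * (3 * p₂ + p₃ - 1) := by
      nlinarith [mul_le_mul_of_nonneg_right h h0]
    exact le_of_mul_le_mul_right this hpos

theorem maj_poly_le {p₁ p₂ p₃ : ℝ} (hp₁ : 1 / 2 ≤ p₁) (hp₁' : p₁ ≤ 1)
    (hp₂' : p₂ ≤ 1) (hp₃ : 0 ≤ p₃) (h23 : p₃ ≤ p₂)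
    (hs : p₁ + 2 * p₂ + p₃ ≤ 2)
    (h : p₁ * (3 * p₂ + p₃ - 1) ≤ p₂) :
    p₁ * (p₂ + p₃ - 2 * (p₂ * p₃)) + p₂ * p₃ ≤ 5 / 9 := by
  by_cases hM : 2 * p₂ + p₃ ≤ 1
  · have : p₂ + p₃ - p₂ * p₃ ≤ 5 / 9 := by nlinarith
    have : 0 ≤ p₂ + p₃ - 2 * (p₂ * p₃) := by nlinarith
    nlinarith
  · push Not at hM
    have hpos : 0 < 3 * p₂ + p₃ - 1 := by linarith
    have key : p₂ * (p₂ + p₃ - 2 * (p₂ * p₃)) ≤ (5 / 9 - p₂ * p₃) * (3 * p₂ + p₃ - 1) := by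
      have : 2 * p₂ + p₃ ≤ 3 / 2 := by linarith
      nlinarith [mul_nonneg (sub_nonneg.2 hp₂') (sub_nonneg.2 h23),
        mul_nonneg (sub_nonneg.2 hp₂') hp₃, sq_nonneg (p₂ - 1 / 3), sq_nonneg (p₃ - 1 / 3),
        mul_nonneg (mul_nonneg (sub_nonneg.2 hp₂') hp₃) (sub_nonneg.2 h23),
        mul_nonneg (mul_nonneg (sub_nonneg.2 this) hp₃) (sub_nonneg.2 h23)]
    have h0 : 0 ≤ p₂ + p₃ - 2 * (p₂ * p₃) := by nlinarith
    have : (p₁ * (p₂ + p₃ - 2 * (p₂ * p₃)) + p₂ * p₃) * (3 * p₂ + p₃ - 1)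
        ≤ 5 / 9 * (3 * p₂ + p₃ - 1) := by
      nlinarith [mul_le_mul_of_nonneg_right h h0]
    exact le_of_mul_le_mul_right this hpos

theorem maj_poly_le_of_le_half {p₁ p₂ p₃ : ℝ} (hp₁ : 0 ≤ p₁) (hp₁' : p₁ ≤ 1 / 2)
    (hp₂ : 0 ≤ p₂) (hp₃ : 0 ≤ p₃)
    (hs : p₁ + 2 * p₂ + p₃ ≤ 2) (hs' : p₁ + p₂ + 2 * p₃ ≤ 2) :
    p₁ * (p₂ + p₃ - 2 * (p₂ * p₃)) + p₂ * p₃ ≤ 5 / 9 := by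
  have h1 : p₂ + p₃ ≤ (4 - 2 * p₁) / 3 := by linarith
  have h2 : p₂ * p₃ ≤ (p₂ + p₃) ^ 2 / 4 := by nlinarith [sq_nonneg (p₂ - p₃)]
  have h3 : (1 - 2 * p₁) * (p₂ * p₃) ≤ (1 - 2 * p₁) * ((p₂ + p₃) ^ 2 / 4) :=
    mul_le_mul_of_nonneg_left h2 (by linarith)
  have h4 : (1 - 2 * p₁) * ((p₂ + p₃) ^ 2 / 4) ≤ (1 - 2 * p₁) * (((4 - 2 * p₁) / 3) ^ 2 / 4) :=
    mul_le_mul_of_nonneg_left (by gcongr) (by linarith)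
  have h5 : p₁ * (p₂ + p₃) ≤ p₁ * ((4 - 2 * p₁) / 3) := mul_le_mul_of_nonneg_left h1 hp₁
  nlinarith [mul_nonneg hp₁ (sub_nonneg.2 hp₁'),
    mul_nonneg (mul_nonneg hp₁ (sub_nonneg.2 hp₁')) hp₁,
    mul_nonneg (mul_nonneg hp₁ (sub_nonneg.2 hp₁')) (sub_nonneg.2 hp₁')]

theorem two_atoms_star_le_of_le {p₁ p₂ p₃ d₁ d₂ d₃ : ℝ} (hp₁ : 0 ≤ p₁) (hp₁' : p₁ ≤ 1)
    (hp₂ : 0 ≤ p₂) (hp₂' : p₂ ≤ 1) (hp₃ : 0 ≤ p₃) (h23 : p₃ ≤ p₂)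
    (hd : d₁ < 1) (h12 : 1 ≤ d₁ + d₂) (h13 : 1 ≤ d₁ + d₃)
    (h₁ : 2 * (p₁ * d₁) + p₂ * d₂ + p₃ * d₃ ≤ 1)
    (h₂ : p₁ * d₁ + 2 * (p₂ * d₂) + p₃ * d₃ ≤ 1) :
    p₁ * (p₂ + p₃ - p₂ * p₃) ≤ 5 / 9 := by
  have e2 : p₂ * (1 - d₁) ≤ p₂ * d₂ := mul_le_mul_of_nonneg_left (by linarith) hp₂
  have e3 : p₃ * (1 - d₁) ≤ p₃ * d₃ := mul_le_mul_of_nonneg_left (by linarith) hp₃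
  rcases le_total (1 / 2) p₁ with h | h
  · refine star_poly_le hp₁ hp₁' hp₂' hp₃ h23
      (two_atoms_star_key hp₁' h (D := 1 - d₁) (by linarith) (by ring) ?_ ?_) <;> nlinarith
  · nlinarith [mul_nonneg (sub_nonneg.2 hp₂') (sub_nonneg.2 (h23.trans hp₂'))]

theorem two_atoms_star_le {p₁ p₂ p₃ d₁ d₂ d₃ : ℝ} (hp₁ : 0 ≤ p₁) (hp₁' : p₁ ≤ 1)
    (hp₂ : 0 ≤ p₂) (hp₂' : p₂ ≤ 1) (hp₃ : 0 ≤ p₃) (hp₃' : p₃ ≤ 1)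
    (hd : d₁ < 1) (h12 : 1 ≤ d₁ + d₂) (h13 : 1 ≤ d₁ + d₃)
    (h₁ : 2 * (p₁ * d₁) + p₂ * d₂ + p₃ * d₃ ≤ 1)
    (h₂ : p₁ * d₁ + 2 * (p₂ * d₂) + p₃ * d₃ ≤ 1)
    (h₃ : p₁ * d₁ + p₂ * d₂ + 2 * (p₃ * d₃) ≤ 1) :
    p₁ * (p₂ + p₃ - p₂ * p₃) ≤ 5 / 9 := by
  rcases le_total p₃ p₂ with h | h
  · exact two_atoms_star_le_of_le hp₁ hp₁' hp₂ hp₂' hp₃ h hd h12 h13 h₁ h₂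
  · have := two_atoms_star_le_of_le hp₁ hp₁' hp₃ hp₃' hp₂ h hd h13 h12 (by linarith)
      (by linarith)
    linarith

theorem two_atoms_majority_le_of_le_half {p₁ p₂ p₃ x d₁ d₂ d₃ : ℝ} (hp₁ : 0 ≤ p₁) (hp₁' : p₁ ≤ 1)
    (hp₂ : 0 ≤ p₂) (hp₂' : p₂ ≤ 1) (hp₃ : 0 ≤ p₃) (hp₃' : p₃ ≤ 1)
    (hx : x ≤ 1 / 2) (hd₁ : x ≤ d₁) (hd₂ : 1 - x ≤ d₂) (hd₃ : 1 - x ≤ d₃)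
    (h₁ : 2 * (p₁ * d₁) + p₂ * d₂ + p₃ * d₃ ≤ 1)
    (h₂ : p₁ * d₁ + 2 * (p₂ * d₂) + p₃ * d₃ ≤ 1)
    (h₃ : p₁ * d₁ + p₂ * d₂ + 2 * (p₃ * d₃) ≤ 1) :
    p₁ * (p₂ + p₃ - 2 * (p₂ * p₃)) + p₂ * p₃ ≤ 5 / 9 := by
  have e1 : p₁ * x ≤ p₁ * d₁ := mul_le_mul_of_nonneg_left hd₁ hp₁
  have e2 : p₂ * (1 - x) ≤ p₂ * d₂ := mul_le_mul_of_nonneg_left hd₂ hp₂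
  have e3 : p₃ * (1 - x) ≤ p₃ * d₃ := mul_le_mul_of_nonneg_left hd₃ hp₃
  have s2 : p₁ + 2 * p₂ + p₃ ≤ 2 := by
    have : (2 * p₂ + p₃ - 1) * (1 - x) ≤ (1 - p₁) * (1 - x) := by nlinarith
    linarith [le_of_mul_le_mul_right this (by linarith)]
  have s3 : p₁ + p₂ + 2 * p₃ ≤ 2 := by
    have : (p₂ + 2 * p₃ - 1) * (1 - x) ≤ (1 - p₁) * (1 - x) := by nlinarith
    linarith [le_of_mul_le_mul_right this (by linarith)]
  rcases le_total (1 / 2) p₁ with h | h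
  · rcases le_total p₃ p₂ with h23 | h23
    · refine maj_poly_le h hp₁' hp₂' hp₃ h23 s2
        (two_atoms_star_key hp₁' h (D := 1 - x) (by linarith) (by ring) ?_ ?_) <;> nlinarith
    · have := maj_poly_le h hp₁' hp₃' hp₂ h23 (by linarith)
        (two_atoms_star_key (d₁ := x) hp₁' h (D := 1 - x) (by linarith) (by ring)
          (by nlinarith) (by nlinarith))
      linarith
  · exact maj_poly_le_of_le_half hp₁ h hp₂ hp₃ s2 s3

theorem two_atoms_majority_le {p₁ p₂ p₃ d₁ d₂ d₃ : ℝ} (hp₁ : 0 ≤ p₁) (hp₁' : p₁ ≤ 1)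
    (hp₂ : 0 ≤ p₂) (hp₂' : p₂ ≤ 1) (hp₃ : 0 ≤ p₃) (hp₃' : p₃ ≤ 1)
    (h12 : 1 ≤ d₁ + d₂) (h13 : 1 ≤ d₁ + d₃) (h23 : 1 ≤ d₂ + d₃)
    (h₁ : 2 * (p₁ * d₁) + p₂ * d₂ + p₃ * d₃ ≤ 1)
    (h₂ : p₁ * d₁ + 2 * (p₂ * d₂) + p₃ * d₃ ≤ 1)
    (h₃ : p₁ * d₁ + p₂ * d₂ + 2 * (p₃ * d₃) ≤ 1) :
    p₁ * (p₂ + p₃ - 2 * (p₂ * p₃)) + p₂ * p₃ ≤ 5 / 9 := by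
  by_cases c1 : d₁ ≤ 1 / 2
  · exact two_atoms_majority_le_of_le_half hp₁ hp₁' hp₂ hp₂' hp₃ hp₃' c1 le_rfl (by linarith)
      (by linarith) h₁ h₂ h₃
  by_cases c2 : d₂ ≤ 1 / 2
  · have := two_atoms_majority_le_of_le_half hp₂ hp₂' hp₁ hp₁' hp₃ hp₃' c2 le_rfl (d₂ := d₁) (d₃ := d₃)
      (by linarith) (by linarith) (by linarith) (by linarith) (by linarith)
    linarith
  by_cases c3 : d₃ ≤ 1 / 2
  · have := two_atoms_majority_le_of_le_half hp₃ hp₃' hp₁ hp₁' hp₂ hp₂' c3 le_rfl (d₂ := d₁) (d₃ := d₂)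
      (by linarith) (by linarith) (by linarith) (by linarith) (by linarith)
    linarith
  push Not at c1 c2 c3
  exact two_atoms_majority_le_of_le_half hp₁ hp₁' hp₂ hp₂' hp₃ hp₃' le_rfl c1.le (by linarith)
      (by linarith) h₁ h₂ h₃

theorem two_atoms_single_or_pair_le {p₁ p₂ p₃ d₁ d₂ d₃ : ℝ} (hp₁ : 0 ≤ p₁) (hp₁' : p₁ ≤ 1)
    (hp₂ : 0 ≤ p₂) (hp₂' : p₂ ≤ 1) (hp₃ : 0 ≤ p₃) (hp₃' : p₃ ≤ 1)
    (hd₂ : 0 ≤ d₂) (hd₃ : 0 ≤ d₃)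
    (hd₁ : 1 ≤ d₁) (h23 : 1 ≤ d₂ + d₃)
    (h₁ : 2 * (p₁ * d₁) + p₂ * d₂ + p₃ * d₃ ≤ 1)
    (h₂ : p₁ * d₁ + 2 * (p₂ * d₂) + p₃ * d₃ ≤ 1)
    (h₃ : p₁ * d₁ + p₂ * d₂ + 2 * (p₃ * d₃) ≤ 1) :
    p₁ + (1 - p₁) * (p₂ * p₃) ≤ 5 / 9 := by
  have e1 : p₁ ≤ p₁ * d₁ := by nlinarith
  have t2 : 0 ≤ p₂ * d₂ := by positivity
  have t3 : 0 ≤ p₃ * d₃ := by positivity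
  have b1 : p₂ * p₃ ≤ (1 - p₁) / 2 := two_atoms_pair_le hp₂ hp₂' hp₃ hp₃' hd₂ hd₃
    (by linarith) (by linarith) h23 (by linarith) (by linarith)
  have b2 : p₂ * p₃ ≤ 1 - 2 * p₁ := by
    rcases le_total p₂ p₃ with h | h
    · have : p₂ * 1 ≤ p₂ * (d₂ + d₃) := mul_le_mul_of_nonneg_left h23 hp₂
      have : p₂ * d₃ ≤ p₃ * d₃ := mul_le_mul_of_nonneg_right h hd₃
      nlinarith
    · have : p₃ * 1 ≤ p₃ * (d₂ + d₃) := mul_le_mul_of_nonneg_left h23 hp₃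
      have : p₃ * d₂ ≤ p₂ * d₂ := mul_le_mul_of_nonneg_right h hd₂
      nlinarith
  have h1 : p₁ ≤ 1 / 2 := by linarith
  rcases le_total p₁ (1 / 3) with h | h <;> nlinarith

/-- The probability that `Z₁ + Z₂ + Z₃ ≥ 1` for independent `Zᵢ` equal to `dᵢ` with probability
`pᵢ` and to `0` otherwise. -/
noncomputable def twoAtomProb (d₁ d₂ d₃ p₁ p₂ p₃ : ℝ) : ℝ :=
  p₁ * p₂ * p₃ * (if 1 ≤ d₁ + d₂ + d₃ then 1 else 0)
    + p₁ * p₂ * (1 - p₃) * (if 1 ≤ d₁ + d₂ then 1 else 0)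
    + p₁ * (1 - p₂) * p₃ * (if 1 ≤ d₁ + d₃ then 1 else 0)
    + (1 - p₁) * p₂ * p₃ * (if 1 ≤ d₂ + d₃ then 1 else 0)
    + p₁ * (1 - p₂) * (1 - p₃) * (if 1 ≤ d₁ then 1 else 0)
    + (1 - p₁) * p₂ * (1 - p₃) * (if 1 ≤ d₂ then 1 else 0)
    + (1 - p₁) * (1 - p₂) * p₃ * (if 1 ≤ d₃ then 1 else 0)

theorem two_singles_le {p₁ p₂ : ℝ} (hp₁ : 0 ≤ p₁) (hp₂ : 0 ≤ p₂)
    (h₁ : 2 * p₁ + p₂ ≤ 1) (h₂ : p₁ + 2 * p₂ ≤ 1) : p₁ + p₂ - p₁ * p₂ ≤ 5 / 9 := by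
  nlinarith

theorem twoAtomProb_le {p₁ p₂ p₃ d₁ d₂ d₃ : ℝ} (hp₁ : 0 ≤ p₁) (hp₁' : p₁ ≤ 1)
    (hp₂ : 0 ≤ p₂) (hp₂' : p₂ ≤ 1) (hp₃ : 0 ≤ p₃) (hp₃' : p₃ ≤ 1)
    (hd₁ : 0 ≤ d₁) (hd₂ : 0 ≤ d₂) (hd₃ : 0 ≤ d₃)
    (h₁ : 2 * (p₁ * d₁) + p₂ * d₂ + p₃ * d₃ ≤ 1)
    (h₂ : p₁ * d₁ + 2 * (p₂ * d₂) + p₃ * d₃ ≤ 1)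
    (h₃ : p₁ * d₁ + p₂ * d₂ + 2 * (p₃ * d₃) ≤ 1) (hne : ¬ (1 ≤ d₁ ∧ 1 ≤ d₂ ∧ 1 ≤ d₃)) :
    twoAtomProb d₁ d₂ d₃ p₁ p₂ p₃ ≤ 5 / 9 := by
  have t1 : 0 ≤ p₁ * d₁ := by positivity
  have t2 : 0 ≤ p₂ * d₂ := by positivity
  have t3 : 0 ≤ p₃ * d₃ := by positivity
  have single : ∀ {p d : ℝ}, 0 ≤ p → 1 ≤ d → p ≤ p * d := fun hp hd => by nlinarith
  unfold twoAtomProb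
  by_cases c1 : 1 ≤ d₁ <;> by_cases c2 : 1 ≤ d₂ <;> by_cases c3 : 1 ≤ d₃
  · exact absurd ⟨c1, c2, c3⟩ hne
  · have := two_singles_le hp₁ hp₂ (by linarith [single hp₁ c1, single hp₂ c2])
      (by linarith [single hp₁ c1, single hp₂ c2])
    rw [if_pos (by linarith), if_pos (by linarith), if_pos (by linarith), if_pos (by linarith),
      if_pos c1, if_pos c2, if_neg c3]
    linarith
  · have := two_singles_le hp₁ hp₃ (by linarith [single hp₁ c1, single hp₃ c3])
      (by linarith [single hp₁ c1, single hp₃ c3])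
    rw [if_pos (by linarith), if_pos (by linarith), if_pos (by linarith), if_pos (by linarith),
      if_pos c1, if_neg c2, if_pos c3]
    linarith
  · rw [if_pos (by linarith), if_pos (by linarith), if_pos (by linarith),
      if_pos c1, if_neg c2, if_neg c3]
    split_ifs with h
    · have := two_atoms_single_or_pair_le hp₁ hp₁' hp₂ hp₂' hp₃ hp₃' hd₂ hd₃ c1 h h₁ h₂ h₃
      linarith
    · linarith [single hp₁ c1]
  · have := two_singles_le hp₂ hp₃ (by linarith [single hp₂ c2, single hp₃ c3])
      (by linarith [single hp₂ c2, single hp₃ c3])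
    rw [if_pos (by linarith), if_pos (by linarith), if_pos (by linarith), if_pos (by linarith),
      if_neg c1, if_pos c2, if_pos c3]
    linarith
  · rw [if_pos (by linarith), if_pos (by linarith), if_pos (by linarith : 1 ≤ d₂ + d₃),
      if_neg c1, if_pos c2, if_neg c3]
    split_ifs with h
    · have := two_atoms_single_or_pair_le hp₂ hp₂' hp₁ hp₁' hp₃ hp₃' hd₁ hd₃ c2 h
        (by linarith) (by linarith) (by linarith)
      linarith
    · linarith [single hp₂ c2]
  · rw [if_pos (by linarith), if_pos (by linarith : 1 ≤ d₁ + d₃),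
      if_pos (by linarith : 1 ≤ d₂ + d₃), if_neg c1, if_neg c2, if_pos c3]
    split_ifs with h
    · have := two_atoms_single_or_pair_le hp₃ hp₃' hp₁ hp₁' hp₂ hp₂' hd₁ hd₂ c3 h
        (by linarith) (by linarith) (by linarith)
      linarith
    · linarith [single hp₃ c3]
  · rw [if_neg c1, if_neg c2, if_neg c3]
    push Not at c1 c2 c3
    by_cases c12 : 1 ≤ d₁ + d₂ <;> by_cases c13 : 1 ≤ d₁ + d₃ <;> by_cases c23 : 1 ≤ d₂ + d₃ <;>
      by_cases c123 : 1 ≤ d₁ + d₂ + d₃ <;> simp only [c12, c13, c23, c123, if_true, if_false] <;>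
      try (exfalso; linarith)
    · linarith [two_atoms_majority_le hp₁ hp₁' hp₂ hp₂' hp₃ hp₃' c12 c13 c23 h₁ h₂ h₃]
    · linarith [two_atoms_star_le hp₁ hp₁' hp₂ hp₂' hp₃ hp₃' c1 c12 c13 h₁ h₂ h₃]
    · linarith [two_atoms_star_le (d₂ := d₁) hp₂ hp₂' hp₁ hp₁' hp₃ hp₃' c2 (by linarith) c23
        (by linarith) (by linarith) (by linarith)]
    · linarith [two_atoms_pair_le hp₁ hp₁' hp₂ hp₂' hd₁ hd₂ zero_le_one le_rfl c12
        (by linarith) (by linarith)]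
    · linarith [two_atoms_star_le (d₂ := d₁) (d₃ := d₂) hp₃ hp₃' hp₁ hp₁' hp₂ hp₂' c3
        (by linarith) (by linarith) (by linarith) (by linarith) (by linarith)]
    · linarith [two_atoms_pair_le hp₁ hp₁' hp₃ hp₃' hd₁ hd₃ zero_le_one le_rfl c13
        (by linarith) (by linarith)]
    · linarith [two_atoms_pair_le hp₂ hp₂' hp₃ hp₃' hd₂ hd₃ zero_le_one le_rfl c23
        (by linarith) (by linarith)]
    · linarith [two_atoms_triple_le hp₁ hp₁' hp₂ hp₂' hp₃ hp₃' c123 h₁ h₂ h₃]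
    · norm_num

theorem prod_one_sub_ge_of_antitone {t₁ t₂ t₃ : ℝ} (ht₃ : 0 ≤ t₃) (h12 : t₂ ≤ t₁) (h23 : t₃ ≤ t₂)
    (h₁ : 2 * t₁ + t₂ + t₃ ≤ 1) :
    27 / 64 ≤ (1 - t₁) * (1 - t₂) * (1 - t₃) := by
  rcases le_total t₁ (1 / 4) with h | h
  · have : (3 / 4 : ℝ) * (3 / 4) ≤ (1 - t₁) * (1 - t₂) := by gcongr <;> linarith
    nlinarith
  have key : 27 / 64 ≤ (1 - t₁) * ((1 - t₂) * (1 - t₃)) := by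
    rcases le_total t₁ (1 / 3) with h' | h'
    · have : 3 * t₁ * (1 - t₁) ≤ (1 - t₂) * (1 - t₃) := by
        nlinarith
      have h2 : 0 ≤ (t₁ - 1 / 4) * (t₁ ^ 2 - 7 / 4 * t₁ + 9 / 16) :=
        mul_nonneg (by linarith) (by nlinarith)
      nlinarith [mul_le_mul_of_nonneg_left this (by linarith : 0 ≤ 1 - t₁)]
    · have : 2 * t₁ ≤ (1 - t₂) * (1 - t₃) := by nlinarith
      nlinarith
  linarith

theorem prod_one_sub_ge {t₁ t₂ t₃ : ℝ} (ht₁ : 0 ≤ t₁) (ht₂ : 0 ≤ t₂) (ht₃ : 0 ≤ t₃)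
    (h₁ : 2 * t₁ + t₂ + t₃ ≤ 1) (h₂ : t₁ + 2 * t₂ + t₃ ≤ 1) (h₃ : t₁ + t₂ + 2 * t₃ ≤ 1) :
    27 / 64 ≤ (1 - t₁) * (1 - t₂) * (1 - t₃) := by
  rcases le_total t₁ t₂ with h12 | h12 <;> rcases le_total t₁ t₃ with h13 | h13 <;>
    rcases le_total t₂ t₃ with h23 | h23
  · linarith [prod_one_sub_ge_of_antitone ht₁ h23 h12 (by linarith)]
  · linarith [prod_one_sub_ge_of_antitone ht₁ h23 h13 (by linarith)]
  · linarith [prod_one_sub_ge_of_antitone ht₁ h23 h12 (by linarith)]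
  · linarith [prod_one_sub_ge_of_antitone ht₃ h12 h13 (by linarith)]
  · linarith [prod_one_sub_ge_of_antitone ht₂ h13 h12 (by linarith)]
  · linarith [prod_one_sub_ge_of_antitone ht₂ h13 h12 (by linarith)]
  · linarith [prod_one_sub_ge_of_antitone ht₂ h13 h23 (by linarith)]
  · linarith [prod_one_sub_ge_of_antitone ht₃ h12 h23 (by linarith)]

theorem prod_one_sub_ge_of_gap {t₁ t₂ t₃ η : ℝ} (hη : 0 ≤ η) (ht₁ : 0 ≤ t₁) (ht₂ : 0 ≤ t₂)
    (ht₃ : 0 ≤ t₃)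
    (h₁ : 2 * t₁ + t₂ + t₃ + 4 * η ≤ 1) (h₂ : t₁ + 2 * t₂ + t₃ + 4 * η ≤ 1)
    (h₃ : t₁ + t₂ + 2 * t₃ + 4 * η ≤ 1) :
    27 / 64 + η / 4 ≤ (1 - t₁) * (1 - t₂) * (1 - t₃) := by
  have := prod_one_sub_ge (t₁ := t₁ + η) (t₂ := t₂ + η) (t₃ := t₃ + η) (by linarith)
    (by linarith) (by linarith) (by linarith) (by linarith) (by linarith)
  have a1 : 1 / 2 ≤ 1 - (t₁ + η) := by linarith
  have a2 : 1 / 2 ≤ 1 - (t₂ + η) := by linarith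
  have a3 : 1 / 2 ≤ 1 - (t₃ + η) := by linarith
  obtain ⟨x, hx⟩ : ∃ x, x = 1 - (t₁ + η) := ⟨_, rfl⟩
  obtain ⟨y, hy⟩ : ∃ x, x = 1 - (t₂ + η) := ⟨_, rfl⟩
  obtain ⟨z, hz⟩ : ∃ x, x = 1 - (t₃ + η) := ⟨_, rfl⟩
  have e1 : 1 - t₁ = x + η := by linarith
  have e2 : 1 - t₂ = y + η := by linarith
  have e3 : 1 - t₃ = z + η := by linarith
  rw [e1, e2, e3]
  rw [← hx, ← hy, ← hz] at this
  rw [← hx] at a1; rw [← hy] at a2; rw [← hz] at a3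
  have hyz : 1 / 4 ≤ y * z := by nlinarith
  have : x * y * z + η * (y * z) ≤ (x + η) * (y + η) * (z + η) := by
    have : 0 ≤ x * (y * η) := by positivity
    have : 0 ≤ x * (z * η) := by positivity
    have : 0 ≤ x * η ^ 2 := by positivity
    have : 0 ≤ y * η ^ 2 := by positivity
    have : 0 ≤ z * η ^ 2 := by positivity
    have : 0 ≤ η ^ 3 := by positivity
    linarith
  nlinarith

theorem prod_one_sub_ge_of_slack {t₁ t₂ t₃ : ℝ} (ht₁ : 0 ≤ t₁) (ht₂ : 0 ≤ t₂) (ht₃ : 0 ≤ t₃)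
    (h₁ : 3 * t₁ + t₂ + t₃ ≤ 1) (h₂ : t₁ + 2 * t₂ + t₃ ≤ 1) (h₃ : t₁ + t₂ + 2 * t₃ ≤ 1) :
    43 / 100 ≤ (1 - t₁) * (1 - t₂) * (1 - t₃) := by
  wlog h23 : t₃ ≤ t₂ generalizing t₂ t₃
  · linarith [this ht₃ ht₂ (by linarith) (by linarith) (by linarith) (by linarith)]
  rcases le_total t₂ (2 / 7) with h | h
  · by_cases h' : t₁ ≤ 1 / 7
    · have : (5 / 7 : ℝ) * (5 / 7) ≤ (1 - t₂) * (1 - t₃) := by gcongr <;> linarith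
      nlinarith
    · have : 10 / 49 + 15 / 7 * t₁ ≤ (1 - t₂) * (1 - t₃) := by
        nlinarith [mul_nonneg (sub_nonneg.2 h) (sub_nonneg.2 (h23.trans h))]
      nlinarith [mul_le_mul_of_nonneg_left this (by linarith : 0 ≤ 1 - t₁)]
  · rcases le_total t₂ (1 / 3) with h' | h'
    · have : 3 * t₂ - 3 * t₂ ^ 2 ≤ (1 - t₁) * (1 - t₃) := by
        nlinarith [mul_nonneg (sub_nonneg.2 h23) (by linarith : 0 ≤ t₂ - t₁)]
      have h2 : 0 ≤ (t₂ - 2 / 7) * (1 / 3 - t₂) := mul_nonneg (by linarith) (by linarith)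
      nlinarith [mul_le_mul_of_nonneg_left this (by linarith : 0 ≤ 1 - t₂)]
    · have : 2 * t₂ ≤ (1 - t₁) * (1 - t₃) := by nlinarith
      nlinarith

/-- The probability that `Y₁ + Y₂ + Y₃ ≥ 1` for independent `Yᵢ` equal to `bᵢ` with probability
`pᵢ` and to `aᵢ` otherwise. -/
noncomputable def twoPointProb (a₁ b₁ a₂ b₂ a₃ b₃ p₁ p₂ p₃ : ℝ) : ℝ :=
  (1 - p₁) * ((1 - p₂) * ((1 - p₃) * (if 1 ≤ a₁ + a₂ + a₃ then 1 else 0)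
      + p₃ * (if 1 ≤ a₁ + a₂ + b₃ then 1 else 0))
    + p₂ * ((1 - p₃) * (if 1 ≤ a₁ + b₂ + a₃ then 1 else 0)
      + p₃ * (if 1 ≤ a₁ + b₂ + b₃ then 1 else 0)))
  + p₁ * ((1 - p₂) * ((1 - p₃) * (if 1 ≤ b₁ + a₂ + a₃ then 1 else 0)
      + p₃ * (if 1 ≤ b₁ + a₂ + b₃ then 1 else 0))
    + p₂ * ((1 - p₃) * (if 1 ≤ b₁ + b₂ + a₃ then 1 else 0)
      + p₃ * (if 1 ≤ b₁ + b₂ + b₃ then 1 else 0)))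

theorem twoPointProb_eq_twoAtomProb {a₁ b₁ a₂ b₂ a₃ b₃ p₁ p₂ p₃ c : ℝ}
    (hc : c = 1 - (a₁ + a₂ + a₃)) (hc0 : 0 < c) :
    twoPointProb a₁ b₁ a₂ b₂ a₃ b₃ p₁ p₂ p₃
      = twoAtomProb ((b₁ - a₁) / c) ((b₂ - a₂) / c) ((b₃ - a₃) / c) p₁ p₂ p₃ := by
  unfold twoPointProb twoAtomProb
  simp only [← add_div, one_le_div hc0]
  rw [if_neg (by linarith : ¬ 1 ≤ a₁ + a₂ + a₃)]
  have e1 : 1 ≤ a₁ + a₂ + b₃ ↔ c ≤ b₃ - a₃ := by constructor <;> intro h <;> linarith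
  have e2 : 1 ≤ a₁ + b₂ + a₃ ↔ c ≤ b₂ - a₂ := by constructor <;> intro h <;> linarith
  have e3 : 1 ≤ b₁ + a₂ + a₃ ↔ c ≤ b₁ - a₁ := by constructor <;> intro h <;> linarith
  have e4 : 1 ≤ a₁ + b₂ + b₃ ↔ c ≤ b₂ - a₂ + (b₃ - a₃) := by
    constructor <;> intro h <;> linarith
  have e5 : 1 ≤ b₁ + a₂ + b₃ ↔ c ≤ b₁ - a₁ + (b₃ - a₃) := by
    constructor <;> intro h <;> linarith
  have e6 : 1 ≤ b₁ + b₂ + a₃ ↔ c ≤ b₁ - a₁ + (b₂ - a₂) := by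
    constructor <;> intro h <;> linarith
  have e7 : 1 ≤ b₁ + b₂ + b₃ ↔ c ≤ b₁ - a₁ + (b₂ - a₂) + (b₃ - a₃) := by
    constructor <;> intro h <;> linarith
  simp only [e1, e2, e3, e4, e5, e6, e7]
  ring

/-- Either the bound `5 / 9` holds, or the probability is bounded by that of a union of three
independent events with probabilities `tᵢ ≥ pᵢ`, where `tᵢ * c` is the mean of `Yᵢ - aᵢ`. -/
theorem twoPointProb_le_or {a₁ b₁ a₂ b₂ a₃ b₃ p₁ p₂ p₃ : ℝ}
    (ha₁ : 0 ≤ a₁) (ha₂ : 0 ≤ a₂) (ha₃ : 0 ≤ a₃) (hab₁ : a₁ ≤ b₁) (hab₂ : a₂ ≤ b₂)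
    (hab₃ : a₃ ≤ b₃) (hp₁ : 0 ≤ p₁) (hp₁' : p₁ ≤ 1)
    (hp₂ : 0 ≤ p₂) (hp₂' : p₂ ≤ 1) (hp₃ : 0 ≤ p₃) (hp₃' : p₃ ≤ 1)
    (hm₁ : (1 - p₁) * a₁ + p₁ * b₁ ≤ 1 / 4) (hm₂ : (1 - p₂) * a₂ + p₂ * b₂ ≤ 1 / 4)
    (hm₃ : (1 - p₃) * a₃ + p₃ * b₃ ≤ 1 / 4) :
    twoPointProb a₁ b₁ a₂ b₂ a₃ b₃ p₁ p₂ p₃ ≤ 5 / 9 ∨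
    ∃ c t₁ t₂ t₃ : ℝ, 0 < c ∧ c = 1 - (a₁ + a₂ + a₃) ∧ p₁ ≤ t₁ ∧ p₂ ≤ t₂ ∧ p₃ ≤ t₃ ∧
      t₁ * c = p₁ * (b₁ - a₁) ∧ t₂ * c = p₂ * (b₂ - a₂) ∧ t₃ * c = p₃ * (b₃ - a₃) ∧
      2 * t₁ + t₂ + t₃ ≤ 1 ∧ t₁ + 2 * t₂ + t₃ ≤ 1 ∧ t₁ + t₂ + 2 * t₃ ≤ 1 ∧
      twoPointProb a₁ b₁ a₂ b₂ a₃ b₃ p₁ p₂ p₃ ≤ 1 - (1 - t₁) * (1 - t₂) * (1 - t₃) := by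
  obtain ⟨c, hc⟩ : ∃ c, c = 1 - (a₁ + a₂ + a₃) := ⟨_, rfl⟩
  have u₁ : 0 ≤ p₁ * (b₁ - a₁) := mul_nonneg hp₁ (by linarith)
  have u₂ : 0 ≤ p₂ * (b₂ - a₂) := mul_nonneg hp₂ (by linarith)
  have u₃ : 0 ≤ p₃ * (b₃ - a₃) := mul_nonneg hp₃ (by linarith)
  have hc0 : 0 < c := by linarith
  rw [twoPointProb_eq_twoAtomProb hc hc0]
  have h₁ : 2 * (p₁ * ((b₁ - a₁) / c)) + p₂ * ((b₂ - a₂) / c) + p₃ * ((b₃ - a₃) / c) ≤ 1 := by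
    simp only [← mul_div_assoc, ← add_div]; rw [div_le_one hc0]; linarith
  have h₂ : p₁ * ((b₁ - a₁) / c) + 2 * (p₂ * ((b₂ - a₂) / c)) + p₃ * ((b₃ - a₃) / c) ≤ 1 := by
    simp only [← mul_div_assoc, ← add_div]; rw [div_le_one hc0]; linarith
  have h₃ : p₁ * ((b₁ - a₁) / c) + p₂ * ((b₂ - a₂) / c) + 2 * (p₃ * ((b₃ - a₃) / c)) ≤ 1 := by
    simp only [← mul_div_assoc, ← add_div]; rw [div_le_one hc0]; linarith
  by_cases hall : 1 ≤ (b₁ - a₁) / c ∧ 1 ≤ (b₂ - a₂) / c ∧ 1 ≤ (b₃ - a₃) / c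
  · right
    have hc1 : (b₁ - a₁) / c * c = b₁ - a₁ := div_mul_cancel₀ _ hc0.ne'
    have hc2 : (b₂ - a₂) / c * c = b₂ - a₂ := div_mul_cancel₀ _ hc0.ne'
    have hc3 : (b₃ - a₃) / c * c = b₃ - a₃ := div_mul_cancel₀ _ hc0.ne'
    generalize (b₁ - a₁) / c = d₁ at *
    generalize (b₂ - a₂) / c = d₂ at *
    generalize (b₃ - a₃) / c = d₃ at *
    obtain ⟨g1, g2, g3⟩ := hall
    have q1 : p₁ ≤ p₁ * d₁ := le_mul_of_one_le_right hp₁ g1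
    have q2 : p₂ ≤ p₂ * d₂ := le_mul_of_one_le_right hp₂ g2
    have q3 : p₃ ≤ p₃ * d₃ := le_mul_of_one_le_right hp₃ g3
    refine ⟨c, p₁ * d₁, p₂ * d₂, p₃ * d₃, hc0, hc, q1, q2, q3, by rw [mul_assoc, hc1],
      by rw [mul_assoc, hc2], by rw [mul_assoc, hc3], h₁, h₂, h₃, ?_⟩
    unfold twoAtomProb
    rw [if_pos (by linarith), if_pos (by linarith), if_pos (by linarith), if_pos (by linarith),
      if_pos g1, if_pos g2, if_pos g3]
    have : (1 - p₁ * d₁) * (1 - p₂ * d₂) * (1 - p₃ * d₃) ≤ (1 - p₁) * (1 - p₂) * (1 - p₃) := by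
      gcongr <;> linarith
    linarith
  · left
    exact twoAtomProb_le hp₁ hp₁' hp₂ hp₂' hp₃ hp₃' (div_nonneg (by linarith) hc0.le)
      (div_nonneg (by linarith) hc0.le) (div_nonneg (by linarith) hc0.le) h₁ h₂ h₃ hall

theorem twoPointProb_le_of_mean_gap {a₁ b₁ a₂ b₂ a₃ b₃ p₁ p₂ p₃ η : ℝ} (hη : 0 ≤ η)
    (hη' : η ≤ 1 / 16)
    (ha₁ : 0 ≤ a₁) (ha₂ : 0 ≤ a₂) (ha₃ : 0 ≤ a₃) (hab₁ : a₁ ≤ b₁) (hab₂ : a₂ ≤ b₂)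
    (hab₃ : a₃ ≤ b₃) (hp₁ : 0 ≤ p₁) (hp₁' : p₁ ≤ 1)
    (hp₂ : 0 ≤ p₂) (hp₂' : p₂ ≤ 1) (hp₃ : 0 ≤ p₃) (hp₃' : p₃ ≤ 1)
    (hm₁ : (1 - p₁) * a₁ + p₁ * b₁ ≤ 1 / 4 - η) (hm₂ : (1 - p₂) * a₂ + p₂ * b₂ ≤ 1 / 4 - η)
    (hm₃ : (1 - p₃) * a₃ + p₃ * b₃ ≤ 1 / 4 - η) :
    twoPointProb a₁ b₁ a₂ b₂ a₃ b₃ p₁ p₂ p₃ ≤ 37 / 64 - η / 4 := by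
  rcases twoPointProb_le_or ha₁ ha₂ ha₃ hab₁ hab₂ hab₃ hp₁ hp₁' hp₂ hp₂' hp₃ hp₃'
    (hm₁.trans (by linarith)) (hm₂.trans (by linarith)) (hm₃.trans (by linarith)) with
    h | ⟨c, t₁, t₂, t₃, hc0, hc, q1, q2, q3, e1, e2, e3, -, -, -, h⟩
  · linarith
  · have hηc : η * c ≤ η := mul_le_of_le_one_right hη (by linarith)
    have h₁ : 2 * t₁ + t₂ + t₃ + 4 * η ≤ 1 := by
      refine le_of_mul_le_mul_right ?_ hc0; linarith
    have h₂ : t₁ + 2 * t₂ + t₃ + 4 * η ≤ 1 := by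
      refine le_of_mul_le_mul_right ?_ hc0; linarith
    have h₃ : t₁ + t₂ + 2 * t₃ + 4 * η ≤ 1 := by
      refine le_of_mul_le_mul_right ?_ hc0; linarith
    linarith [prod_one_sub_ge_of_gap hη (hp₁.trans q1) (hp₂.trans q2) (hp₃.trans q3) h₁ h₂ h₃]

/-- The indicator function of `[1/8, ∞)`. -/
noncomputable def eighthInd (x : ℝ) : ℝ := if 1 / 8 ≤ x then 1 else 0

theorem eighthInd_le_one (x : ℝ) : eighthInd x ≤ 1 := by
  unfold eighthInd; split_ifs <;> norm_num

theorem twoPointProb_add_tail_le {a₁ b₁ a₂ b₂ a₃ b₃ p₁ p₂ p₃ : ℝ}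
    (ha₁ : 0 ≤ a₁) (ha₂ : 0 ≤ a₂) (ha₃ : 0 ≤ a₃) (hab₁ : a₁ ≤ b₁) (hab₂ : a₂ ≤ b₂)
    (hab₃ : a₃ ≤ b₃) (hp₁ : 0 ≤ p₁) (hp₁' : p₁ ≤ 1)
    (hp₂ : 0 ≤ p₂) (hp₂' : p₂ ≤ 1) (hp₃ : 0 ≤ p₃) (hp₃' : p₃ ≤ 1)
    (hm₁ : (1 - p₁) * a₁ + p₁ * b₁ ≤ 1 / 4) (hm₂ : (1 - p₂) * a₂ + p₂ * b₂ ≤ 1 / 4)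
    (hm₃ : (1 - p₃) * a₃ + p₃ * b₃ ≤ 1 / 4) :
    twoPointProb a₁ b₁ a₂ b₂ a₃ b₃ p₁ p₂ p₃ + 1 / 400 *
      (((1 - p₁) * eighthInd a₁ + p₁ * eighthInd b₁)
        + ((1 - p₂) * eighthInd a₂ + p₂ * eighthInd b₂)
        + ((1 - p₃) * eighthInd a₃ + p₃ * eighthInd b₃)) ≤ 37 / 64 + 3 / 1600 := by
  have avg_le : ∀ {p : ℝ} (x y : ℝ), 0 ≤ p → p ≤ 1 →
      (1 - p) * eighthInd x + p * eighthInd y ≤ 1 := fun {p} x y h h' => by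
    have e1 : (1 - p) * eighthInd x ≤ (1 - p) * 1 :=
      mul_le_mul_of_nonneg_left (eighthInd_le_one x) (by linarith)
    have e2 : p * eighthInd y ≤ p * 1 := mul_le_mul_of_nonneg_left (eighthInd_le_one y) h
    linarith
  have z1 := avg_le a₁ b₁ hp₁ hp₁'
  have z2 := avg_le a₂ b₂ hp₂ hp₂'
  have z3 := avg_le a₃ b₃ hp₃ hp₃'
  rcases twoPointProb_le_or ha₁ ha₂ ha₃ hab₁ hab₂ hab₃ hp₁ hp₁' hp₂ hp₂' hp₃ hp₃'
    hm₁ hm₂ hm₃ with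
    h | ⟨c, t₁, t₂, t₃, hc0, hc, q1, q2, q3, e1, e2, e3, k1, k2, k3, h⟩
  · linarith
  have s1 := hp₁.trans q1
  have s2 := hp₂.trans q2
  have s3 := hp₃.trans q3
  by_cases c1 : 1 / 8 ≤ a₁
  · have h₁ : 3 * t₁ + t₂ + t₃ ≤ 1 := by
      refine le_of_mul_le_mul_right ?_ hc0; linarith
    linarith [prod_one_sub_ge_of_slack s1 s2 s3 h₁ k2 k3]
  by_cases c2 : 1 / 8 ≤ a₂
  · have h₁ : 3 * t₂ + t₁ + t₃ ≤ 1 := by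
      refine le_of_mul_le_mul_right ?_ hc0; linarith
    linarith [prod_one_sub_ge_of_slack s2 s1 s3 h₁ (by linarith) (by linarith)]
  by_cases c3 : 1 / 8 ≤ a₃
  · have h₁ : 3 * t₃ + t₁ + t₂ ≤ 1 := by
      refine le_of_mul_le_mul_right ?_ hc0; linarith
    linarith [prod_one_sub_ge_of_slack s3 s1 s2 h₁ (by linarith) (by linarith)]
  have upper_le : ∀ {p : ℝ} (y : ℝ), 0 ≤ p → p * eighthInd y ≤ p := fun {p} y h => by
    simpa using mul_le_mul_of_nonneg_left (eighthInd_le_one y) h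
  have i1 : eighthInd a₁ = 0 := if_neg c1
  have i2 : eighthInd a₂ = 0 := if_neg c2
  have i3 : eighthInd a₃ = 0 := if_neg c3
  rw [i1, i2, i3]
  linarith [prod_one_sub_ge s1 s2 s3 k1 k2 k3, upper_le b₁ hp₁, upper_le b₂ hp₂, upper_le b₃ hp₃]

/-- A function on a finite set whose average is at most `B` under every two-point distribution of
mean at most `μ` has average at most `B` under the uniform distribution, if that has mean at most
`μ`. -/
theorem sum_le_of_two_point {ι : Type*} [Fintype ι] (w f : ι → ℝ) {μ B : ℝ}
    (hw : ∑ i, w i ≤ Fintype.card ι * μ)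
    (h : ∀ i j p, w i ≤ w j → 0 ≤ p → p ≤ 1 → (1 - p) * w i + p * w j ≤ μ →
      (1 - p) * f i + p * f j ≤ B) :
    ∑ i, f i ≤ Fintype.card ι * B := by
  obtain ⟨l, hl0, hl⟩ : ∃ l : ℝ, 0 ≤ l ∧ ∀ i, f i ≤ B + l * (w i - μ) := by
    have low : ∀ i, w i ≤ μ → f i ≤ B := fun i hi => by
      have := h i i 0 le_rfl le_rfl zero_le_one (by linarith)
      linarith
    by_cases hf : ∀ i, f i ≤ B
    · exact ⟨0, le_rfl, fun i => by simpa using hf i⟩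
    push Not at hf
    obtain ⟨k, hk⟩ := hf
    have hkμ : μ < w k := by
      by_contra hh
      exact absurd (low k (not_lt.1 hh)) (not_le.2 hk)
    obtain ⟨j, hj, hmax⟩ := Finset.exists_max_image (Finset.univ.filter fun i => μ < w i)
      (fun i => (f i - B) / (w i - μ)) ⟨k, by simpa using hkμ⟩
    simp only [Finset.mem_filter, Finset.mem_univ, true_and] at hj hmax
    have hl0 : 0 ≤ (f j - B) / (w j - μ) :=
      (div_nonneg (by linarith) (by linarith)).trans (hmax k hkμ)
    refine ⟨(f j - B) / (w j - μ), hl0, fun i => ?_⟩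
    rcases lt_or_ge μ (w i) with hi | hi
    · have := hmax i hi
      rw [div_le_iff₀ (by linarith)] at this
      linarith
    · have hij : 0 < w j - w i := by linarith
      have hp := h i j ((μ - w i) / (w j - w i)) (by linarith) (div_nonneg (by linarith) hij.le)
        (by rw [div_le_one hij]; linarith) (by field_simp; linarith)
      have e : (1 - (μ - w i) / (w j - w i)) * f i + (μ - w i) / (w j - w i) * f j
          = ((w j - μ) * f i + (μ - w i) * f j) / (w j - w i) := by field_simp; ring
      rw [e, div_le_iff₀ hij] at hp
      have hj' : 0 < w j - μ := by linarith
      have : f i - B ≤ (f j - B) / (w j - μ) * (w i - μ) := by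
        rw [div_mul_eq_mul_div, le_div_iff₀ hj']
        linarith
      linarith
  calc ∑ i, f i ≤ ∑ i, (B + l * (w i - μ)) := Finset.sum_le_sum fun i _ => hl i
    _ = Fintype.card ι * B + l * (∑ i, w i - Fintype.card ι * μ) := by
      rw [Finset.sum_add_distrib, ← Finset.mul_sum, Finset.sum_sub_distrib]
      simp
    _ ≤ Fintype.card ι * B := by
      have := mul_nonpos_of_nonneg_of_nonpos hl0 (sub_nonpos.2 hw)
      linarith

/-- The version of `sum_le_of_two_point` for three independent variables. -/
theorem sum_sum_sum_le_of_two_point {ι : Type*} [Fintype ι] (w : ι → ℝ) (F : ι → ι → ι → ℝ)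
    {μ B : ℝ} (hw : ∑ i, w i ≤ Fintype.card ι * μ)
    (h : ∀ i₁ j₁ p₁ i₂ j₂ p₂ i₃ j₃ p₃,
      w i₁ ≤ w j₁ → 0 ≤ p₁ → p₁ ≤ 1 → (1 - p₁) * w i₁ + p₁ * w j₁ ≤ μ →
      w i₂ ≤ w j₂ → 0 ≤ p₂ → p₂ ≤ 1 → (1 - p₂) * w i₂ + p₂ * w j₂ ≤ μ →
      w i₃ ≤ w j₃ → 0 ≤ p₃ → p₃ ≤ 1 → (1 - p₃) * w i₃ + p₃ * w j₃ ≤ μ →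
      (1 - p₁) * ((1 - p₂) * ((1 - p₃) * F i₁ i₂ i₃ + p₃ * F i₁ i₂ j₃)
          + p₂ * ((1 - p₃) * F i₁ j₂ i₃ + p₃ * F i₁ j₂ j₃))
        + p₁ * ((1 - p₂) * ((1 - p₃) * F j₁ i₂ i₃ + p₃ * F j₁ i₂ j₃)
          + p₂ * ((1 - p₃) * F j₁ j₂ i₃ + p₃ * F j₁ j₂ j₃)) ≤ B) :
    ∑ i, ∑ j, ∑ k, F i j k ≤ (Fintype.card ι : ℝ) ^ 3 * B := by
  have : (Fintype.card ι : ℝ) ^ 3 * B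
      = Fintype.card ι * (Fintype.card ι * (Fintype.card ι * B)) := by ring
  rw [this]
  refine sum_le_of_two_point w _ hw fun i₁ j₁ p₁ a1 a2 a3 a4 => ?_
  simp only [Finset.mul_sum, ← Finset.sum_add_distrib]
  simp only [← Finset.mul_sum, Finset.sum_add_distrib]
  rw [Finset.mul_sum, Finset.mul_sum, ← Finset.sum_add_distrib]
  refine sum_le_of_two_point w _ hw fun i₂ j₂ p₂ b1 b2 b3 b4 => ?_
  have e : (1 - p₂) * ((1 - p₁) * ∑ k, F i₁ i₂ k + p₁ * ∑ k, F j₁ i₂ k)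
      + p₂ * ((1 - p₁) * ∑ k, F i₁ j₂ k + p₁ * ∑ k, F j₁ j₂ k)
      = ∑ k, ((1 - p₂) * ((1 - p₁) * F i₁ i₂ k + p₁ * F j₁ i₂ k)
      + p₂ * ((1 - p₁) * F i₁ j₂ k + p₁ * F j₁ j₂ k)) := by
    simp only [Finset.mul_sum, Finset.sum_add_distrib, mul_add]
  rw [e]
  refine sum_le_of_two_point w _ hw fun i₃ j₃ p₃ c1 c2 c3 c4 => ?_
  have := h i₁ j₁ p₁ i₂ j₂ p₂ i₃ j₃ p₃ a1 a2 a3 a4 b1 b2 b3 b4 c1 c2 c3 c4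
  linarith

/-- If nonnegative weights have mean at most `1 / 4 - η`, the proportion of triples of weight at
least `1` falls short of `37 / 64` by at least `η / 4`. -/
theorem sum_triple_ind_le_of_mean_gap {ι : Type*} [Fintype ι] (w : ι → ℝ) (hw0 : ∀ i, 0 ≤ w i)
    {η : ℝ} (hη : 0 ≤ η) (hη' : η ≤ 1 / 16)
    (hw : ∑ i, w i ≤ Fintype.card ι * (1 / 4 - η)) :
    ∑ i, ∑ j, ∑ k, (if 1 ≤ w i + w j + w k then (1 : ℝ) else 0)
      ≤ (Fintype.card ι : ℝ) ^ 3 * (37 / 64 - η / 4) := by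
  refine sum_sum_sum_le_of_two_point w _ hw ?_
  intro i₁ j₁ p₁ i₂ j₂ p₂ i₃ j₃ p₃ a1 a2 a3 a4 b1 b2 b3 b4 c1 c2 c3 c4
  exact twoPointProb_le_of_mean_gap hη hη' (hw0 _) (hw0 _) (hw0 _) a1 b1 c1 a2 a3 b2 b3 c2 c3
    a4 b4 c4

/-- If nonnegative weights have mean at most `1 / 4` and a proportion of at least `1 / 4 + η` of
them is at least `1 / 8`, the proportion of triples of weight at least `1` falls short of
`37 / 64` by a multiple of `η`. -/
theorem sum_triple_ind_le_of_tail {ι : Type*} [Fintype ι] (w : ι → ℝ) (hw0 : ∀ i, 0 ≤ w i)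
    {η : ℝ} (hw : ∑ i, w i ≤ Fintype.card ι * (1 / 4))
    (htail : Fintype.card ι * (1 / 4 + η) ≤ ∑ i, eighthInd (w i)) :
    ∑ i, ∑ j, ∑ k, (if 1 ≤ w i + w j + w k then (1 : ℝ) else 0)
      ≤ (Fintype.card ι : ℝ) ^ 3 * (37 / 64 - 3 / 400 * η) := by
  have key : ∑ i, ∑ j, ∑ k, ((if 1 ≤ w i + w j + w k then (1 : ℝ) else 0)
      + 1 / 400 * (eighthInd (w i) + eighthInd (w j) + eighthInd (w k)))
      ≤ (Fintype.card ι : ℝ) ^ 3 * (37 / 64 + 3 / 1600) := by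
    refine sum_sum_sum_le_of_two_point w _ hw ?_
    intro i₁ j₁ p₁ i₂ j₂ p₂ i₃ j₃ p₃ a1 a2 a3 a4 b1 b2 b3 b4 c1 c2 c3 c4
    have := twoPointProb_add_tail_le (hw0 _) (hw0 _) (hw0 _) a1 b1 c1 a2 a3 b2 b3 c2 c3
      a4 b4 c4
    unfold twoPointProb at this
    linarith
  have split : ∑ i, ∑ j, ∑ k, ((if 1 ≤ w i + w j + w k then (1 : ℝ) else 0)
      + 1 / 400 * (eighthInd (w i) + eighthInd (w j) + eighthInd (w k)))
      = ∑ i, ∑ j, ∑ k, (if 1 ≤ w i + w j + w k then (1 : ℝ) else 0)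
        + 3 / 400 * (Fintype.card ι : ℝ) ^ 2 * ∑ i, eighthInd (w i) := by
    simp only [Finset.sum_add_distrib, ← Finset.mul_sum, Finset.sum_const, Finset.card_univ,
      nsmul_eq_mul]
    ring
  rw [split] at key
  have := mul_le_mul_of_nonneg_left htail
    (by positivity : 0 ≤ 3 / 400 * (Fintype.card ι : ℝ) ^ 2)
  linarith

/-- A linear programming alternative: a hypergraph whose edges all meet `A` in exactly one vertex
has a fractional perfect matching, or there are vertex weights that are nonnegative on every edge
and have negative total. -/
theorem exists_fractional_perfect_matching_or_weight {V : Type*} [Fintype V] [DecidableEq V]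
    (H : Finset (Finset V)) (A : Finset V) (hA : ∀ e ∈ H, (e ∩ A).card = 1)
    (hA0 : 0 < A.card) :
    (∃ f : Finset V → ℝ, (∀ e, 0 ≤ f e) ∧ (∀ e, e ∉ H → f e = 0) ∧
        ∀ v, ∑ e ∈ H.filter (fun e => v ∈ e), f e = 1) ∨
      ∃ g : V → ℝ, (∀ e ∈ H, 0 ≤ ∑ v ∈ e, g v) ∧ ∑ v, g v < 0 := by
  have hm : (0 : ℝ) < A.card := by exact_mod_cast hA0
  obtain ⟨φ, hφ⟩ : ∃ φ : Finset V → V → ℝ, φ = fun e v => if v ∈ e then (A.card : ℝ) else 0 :=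
    ⟨_, rfl⟩
  have hinj : Function.Injective φ := by
    intro e e' h
    ext v
    have := congrFun h v
    simp only [hφ] at this
    by_cases h1 : v ∈ e <;> by_cases h2 : v ∈ e' <;> simp [h1, h2, hm.ne', hm.ne] at this ⊢
  by_cases hmem : (1 : V → ℝ) ∈ convexHull ℝ ((H.image φ : Finset (V → ℝ)) : Set (V → ℝ))
  · left
    rw [Finset.mem_convexHull'] at hmem
    obtain ⟨c, hc0, -, hc⟩ := hmem
    refine ⟨fun e => if e ∈ H then A.card * c (φ e) else 0, fun e => ?_, fun e he => if_neg he,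
      fun v => ?_⟩
    · dsimp only
      split_ifs with he
      · exact mul_nonneg hm.le (hc0 _ (Finset.mem_image_of_mem _ he))
      · exact le_rfl
    · have := congrFun hc v
      rw [Finset.sum_image fun x _ y _ h => hinj h, Finset.sum_apply] at this
      rw [Finset.sum_filter, ← Pi.one_apply (M := fun _ : V => ℝ) v, ← this]
      refine Finset.sum_congr rfl fun e he => ?_
      simp only [he, if_true, Pi.smul_apply, smul_eq_mul]
      by_cases hv : v ∈ e <;> simp [hφ, hv, mul_comm]
  · right
    obtain ⟨F, u, hlt, hu⟩ := geometric_hahn_banach_closed_point (convex_convexHull ℝ _)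
      (Set.Finite.isClosed_convexHull ℝ (Finset.finite_toSet (H.image φ))) hmem
    have hF : ∀ y : V → ℝ, F y = ∑ v, y v * F (Pi.single v 1) := fun y => by
      conv_lhs => rw [pi_eq_sum_univ' y]
      simp [map_sum]
    refine ⟨fun v => (if v ∈ A then u / A.card else 0) - F (Pi.single v 1), fun e he => ?_, ?_⟩
    · have h1 := hlt (φ e) (subset_convexHull ℝ _ (by simpa using ⟨e, he, rfl⟩))
      have h2 : F (φ e) = A.card * ∑ v ∈ e, F (Pi.single v 1) := by
        rw [hF, hφ]
        simp [ite_mul, Finset.sum_ite_mem, Finset.mul_sum]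
      rw [Finset.sum_sub_distrib, Finset.sum_ite_mem, Finset.sum_const, hA e he, one_smul,
        sub_nonneg, le_div_iff₀ hm]
      linarith
    · rw [Finset.sum_sub_distrib, Finset.sum_ite_mem, Finset.univ_inter, Finset.sum_const,
        nsmul_eq_mul, mul_div_cancel₀ _ hm.ne']
      have := hF 1
      simp only [Pi.one_apply, one_mul] at this
      linarith

/-- A finite set has subsets of every size consisting of points where `f` is smallest. -/
theorem exists_lowest_subset {α : Type*} [Fintype α] [DecidableEq α] (f : α → ℝ) :
    ∀ k ≤ Fintype.card α, ∃ s : Finset α, s.card = k ∧ ∀ a ∈ s, ∀ b ∉ s, f a ≤ f b := by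
  intro k
  induction k with
  | zero => exact fun _ => ⟨∅, by simp⟩
  | succ k ih =>
    intro hk
    obtain ⟨s, hs, hsf⟩ := ih (by omega)
    have hne : sᶜ.Nonempty := by
      rw [← Finset.card_pos, Finset.card_compl]; omega
    obtain ⟨b, hb, hmin⟩ := Finset.exists_min_image sᶜ f hne
    rw [Finset.mem_compl] at hb
    refine ⟨insert b s, by rw [Finset.card_insert_of_notMem hb, hs], fun a ha c hc => ?_⟩
    rw [Finset.mem_insert, not_or] at hc
    rcases Finset.mem_insert.1 ha with rfl | ha
    · exact hmin c (by simpa using hc.2)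
    · exact hsf a ha c hc.2

/-- Six times the codegree of `x` and `v` is at most the number of ordered triples that complete
`x` and `v` to an edge. -/
theorem six_mul_codegree_le {m n : ℕ} (H : Finset (Finset (Fin m ⊕ Fin n)))
    (hH : ∀ e ∈ H, ∃ (x : Fin m) (s : Finset (Fin n)),
      s.card = 4 ∧ e = insert (Sum.inl x) (s.image Sum.inr)) (x : Fin m) (v : Fin n) :
    6 * (H.filter (fun e => Sum.inl x ∈ e ∧ Sum.inr v ∈ e)).card
      ≤ ((Finset.univ : Finset (Fin n × Fin n × Fin n)).filter fun q =>
        insert (Sum.inl x) (({v, q.1, q.2.1, q.2.2} : Finset (Fin n)).image Sum.inr) ∈ H).card := by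
  refine Finset.mul_card_image_le_card_of_maps_to (f := fun q : Fin n × Fin n × Fin n =>
    insert (Sum.inl x) (({v, q.1, q.2.1, q.2.2} : Finset (Fin n)).image Sum.inr)) ?_ 6 ?_
  · intro q hq
    simpa using hq
  · intro e he
    obtain ⟨heH, hxe, hve⟩ := Finset.mem_filter.1 he
    obtain ⟨y, s, hs, rfl⟩ := hH e heH
    obtain rfl : x = y := by simpa using hxe
    have hvs : v ∈ s := by simpa using hve
    obtain ⟨a, b, c, hab, hac, hbc, habc⟩ := Finset.card_eq_three.1
      (show (s.erase v).card = 3 by rw [Finset.card_erase_of_mem hvs, hs])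
    obtain rfl : s = {v, a, b, c} := by rw [← habc, Finset.insert_erase hvs]
    have h6 : ({(a, b, c), (a, c, b), (b, a, c), (b, c, a), (c, a, b), (c, b, a)} :
        Finset (Fin n × Fin n × Fin n)).card = 6 := by
      simp [Finset.card_insert_of_notMem, hab, hac, hbc, hab.symm, hac.symm, hbc.symm]
    refine h6.ge.trans ?_
    refine Finset.card_le_card fun q hq => ?_
    have hq' : ({v, q.1, q.2.1, q.2.2} : Finset (Fin n)) = {v, a, b, c} := by
      simp only [Finset.mem_insert, Finset.mem_singleton] at hq
      clear h6 habc hve hxe heH he hs hvs hH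
      rcases hq with rfl | rfl | rfl | rfl | rfl | rfl <;> congr 1 <;> ext z <;>
        simp only [Finset.mem_insert, Finset.mem_singleton] <;> tauto
    simp only [Finset.mem_filter, Finset.mem_univ, true_and, hq', and_true]
    exact heH

theorem sum_insert_le_of_nonneg {α : Type*} [DecidableEq α] {w : α → ℝ} (hw : ∀ i, 0 ≤ w i)
    (a : α) (s : Finset α) : ∑ i ∈ insert a s, w i ≤ w a + ∑ i ∈ s, w i := by
  by_cases h : a ∈ s
  · rw [Finset.insert_eq_of_mem h]; linarith [hw a]
  · rw [Finset.sum_insert h]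

/-- If the weights `h`, `w` are nonnegative on edges, `h x = -1` and `w v = 0`, then every triple
completing `x` and `v` to an edge has `w`-weight at least `1`. -/
theorem six_mul_codegree_le_sum {m n : ℕ} (H : Finset (Finset (Fin m ⊕ Fin n)))
    (hH : ∀ e ∈ H, ∃ (x : Fin m) (s : Finset (Fin n)),
      s.card = 4 ∧ e = insert (Sum.inl x) (s.image Sum.inr)) (x : Fin m) (v : Fin n)
    (h : Fin m → ℝ) (w : Fin n → ℝ) (hw : ∀ i, 0 ≤ w i) (hx : h x = -1) (hv : w v = 0)
    (hedge : ∀ y s, insert (Sum.inl y) (s.image Sum.inr) ∈ H → 0 ≤ h y + ∑ i ∈ s, w i) :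
    6 * ((H.filter (fun e => Sum.inl x ∈ e ∧ Sum.inr v ∈ e)).card : ℝ)
      ≤ ∑ i, ∑ j, ∑ k, (if 1 ≤ w i + w j + w k then (1 : ℝ) else 0) := by
  have h1 : 6 * ((H.filter (fun e => Sum.inl x ∈ e ∧ Sum.inr v ∈ e)).card : ℝ)
      ≤ ((Finset.univ : Finset (Fin n × Fin n × Fin n)).filter fun q =>
        insert (Sum.inl x) (({v, q.1, q.2.1, q.2.2} : Finset (Fin n)).image Sum.inr) ∈ H).card := by
    exact_mod_cast six_mul_codegree_le H hH x v
  refine h1.trans ?_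
  rw [Finset.card_filter, Nat.cast_sum, Fintype.sum_prod_type]
  simp only [Fintype.sum_prod_type]
  refine Finset.sum_le_sum fun i _ => Finset.sum_le_sum fun j _ => Finset.sum_le_sum fun k _ => ?_
  split_ifs with a b b
  · simp
  · exfalso
    have e0 := hedge _ _ a
    have e1 := sum_insert_le_of_nonneg hw v {i, j, k}
    have e2 := sum_insert_le_of_nonneg hw i {j, k}
    have e3 := sum_insert_le_of_nonneg hw j {k}
    rw [Finset.sum_singleton] at e3
    linarith
  · simp
  · simp

theorem six_mul_choose_sub_choose_ge {m n : ℕ} (hn : n = 4 * m) (hm : 0 < m) :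
    (n : ℝ) ^ 3 * (37 / 64) - 9 * (n : ℝ) ^ 2
      ≤ 6 * ((Nat.choose (n - 1) 3 : ℝ) - (Nat.choose (3 * n / 4) 3 : ℝ)) := by
  have h3 : 3 * n / 4 = 3 * m := by omega
  have h1 : ((n - 3 : ℕ) : ℝ) ^ 3 ≤ 6 * (Nat.choose (n - 1) 3 : ℝ) := by
    have := Nat.pow_le_choose (α := ℝ) 3 (n - 1)
    have e : n - 1 + 1 - 3 = n - 3 := by omega
    rw [e, div_le_iff₀ (by positivity)] at this
    norm_num [Nat.factorial] at this ⊢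
    linarith
  have h2 : 6 * (Nat.choose (3 * n / 4) 3 : ℝ) ≤ (3 * n / 4 : ℝ) ^ 3 := by
    have := Nat.choose_le_pow_div (α := ℝ) 3 (3 * m)
    rw [le_div_iff₀ (by positivity)] at this
    rw [h3, hn]
    norm_num [Nat.factorial] at this ⊢
    calc 6 * ((3 * m).choose 3 : ℝ) = ((3 * m).choose 3 : ℝ) * 6 := mul_comm _ _
      _ ≤ _ := this
      _ = _ := by ring
  have h4 : ((n - 3 : ℕ) : ℝ) = n - 3 := by
    rw [Nat.cast_sub (by omega)]; norm_num
  have h5 : (4 : ℝ) ≤ n := by exact_mod_cast (by omega : 4 ≤ n)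
  rw [h4] at h1
  nlinarith

/-- If every independent set is small, any two large subsets of the classes span an edge. -/
theorem exists_edge_of_large {m n : ℕ} (H : Finset (Finset (Fin m ⊕ Fin n)))
    (hH : ∀ e ∈ H, ∃ (x : Fin m) (s : Finset (Fin n)),
      s.card = 4 ∧ e = insert (Sum.inl x) (s.image Sum.inr)) (a b : ℝ)
    (hS : ∀ S : Finset (Fin m ⊕ Fin n), (∀ e ∈ H, ¬ e ⊆ S) →
        ¬ (a ≤ ((S.filter (fun v => v.isLeft = true)).card : ℝ) ∧
            b ≤ ((S.filter (fun v => v.isRight = true)).card : ℝ)))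
    (X : Finset (Fin m)) (Y : Finset (Fin n)) (hX : a ≤ X.card) (hY : b ≤ Y.card) :
    ∃ x ∈ X, ∃ s ⊆ Y, s.card = 4 ∧ insert (Sum.inl x) (s.image Sum.inr) ∈ H := by
  have hl : ((X.disjSum Y).filter (fun v => v.isLeft = true)) = X.image Sum.inl := by
    ext (z | z) <;> simp
  have hr : ((X.disjSum Y).filter (fun v => v.isRight = true)) = Y.image Sum.inr := by
    ext (z | z) <;> simp
  by_contra hcon
  refine hS (X.disjSum Y) (fun e he hsub => hcon ?_) ?_
  · obtain ⟨x, s, hs, rfl⟩ := hH e he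
    refine ⟨x, ?_, s, fun i hi => ?_, hs, he⟩
    · simpa using hsub (Finset.mem_insert_self _ _)
    · simpa using hsub (Finset.mem_insert_of_mem (Finset.mem_image_of_mem _ hi))
  · rw [hl, hr, Finset.card_image_of_injective _ Sum.inl_injective,
      Finset.card_image_of_injective _ Sum.inr_injective]
    exact ⟨hX, hY⟩

/-- Weights on the two classes, normalised to have minima `-1` and `0`, cannot be nonnegative on
all edges and of negative total. -/
theorem false_of_normalized_weight {m n : ℕ} (hn : n = 4 * m) {ε : ℝ} (hε : 0 < ε)
    (hε' : ε ≤ 1 / 16) (hlarge : 10000 / ε ≤ n) (H : Finset (Finset (Fin m ⊕ Fin n)))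
    (hH : ∀ e ∈ H, ∃ (x : Fin m) (s : Finset (Fin n)),
      s.card = 4 ∧ e = insert (Sum.inl x) (s.image Sum.inr))
    (hS : ∀ S : Finset (Fin m ⊕ Fin n), (∀ e ∈ H, ¬ e ⊆ S) →
        ¬ ((n : ℝ) / 4 - ε * n ≤ ((S.filter (fun v => v.isLeft = true)).card : ℝ) ∧
            3 * (n : ℝ) / 4 - ε * n ≤ ((S.filter (fun v => v.isRight = true)).card : ℝ)))
    (x : Fin m) (v : Fin n)
    (hdeg : (Nat.choose (n - 1) 3 : ℝ) - (Nat.choose (3 * n / 4) 3 : ℝ)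
        - 3 * (ε / 10000) * (n : ℝ) ^ 3
          ≤ ((H.filter (fun e => Sum.inl x ∈ e ∧ Sum.inr v ∈ e)).card : ℝ))
    (h : Fin m → ℝ) (w : Fin n → ℝ) (hw : ∀ i, 0 ≤ w i) (hh : ∀ y, -1 ≤ h y) (hx : h x = -1)
    (hv : w v = 0)
    (hedge : ∀ y s, insert (Sum.inl y) (s.image Sum.inr) ∈ H → 0 ≤ h y + ∑ i ∈ s, w i)
    (htot : ∑ y, h y + ∑ i, w i < 0) : False := by
  have hm : 0 < m := x.pos
  have hnR : (n : ℝ) = 4 * m := by rw [hn]; push_cast; ring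
  have hεn : 10000 ≤ ε * n := by rwa [div_le_iff₀ hε, mul_comm] at hlarge
  have hn0 : (0 : ℝ) < n := by
    have : (0 : ℝ) < m := by exact_mod_cast hm
    linarith
  have hcod := six_mul_codegree_le_sum H hH x v h w hw hx hv hedge
  have hbin := six_mul_choose_sub_choose_ge hn hm
  have hbig : ∑ i, ∑ j, ∑ k, (if 1 ≤ w i + w j + w k then (1 : ℝ) else 0)
      ≤ (n : ℝ) ^ 3 * (37 / 64 - 3 / 800 * ε) → False := by
    intro hle
    have h2 : 10000 * (n : ℝ) ^ 2 ≤ ε * n ^ 3 := by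
      calc 10000 * (n : ℝ) ^ 2 ≤ ε * n * (n : ℝ) ^ 2 := by gcongr
        _ = _ := by ring
    have h3 : (0 : ℝ) < (n : ℝ) ^ 2 := by positivity
    nlinarith
  have hεn' : ε * n ≤ n / 16 := by nlinarith
  obtain ⟨X, hXc, hX⟩ := exists_lowest_subset h ⌈(n : ℝ) / 4 - ε * n⌉₊ (by
    rw [Fintype.card_fin, Nat.ceil_le]; linarith)
  obtain ⟨Y, hYc, hY⟩ := exists_lowest_subset w ⌈3 * (n : ℝ) / 4 - ε * n⌉₊ (by
    rw [Fintype.card_fin, Nat.ceil_le]; linarith)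
  have hXlo : (n : ℝ) / 4 - ε * n ≤ X.card := by rw [hXc]; exact Nat.le_ceil _
  have hYlo : 3 * (n : ℝ) / 4 - ε * n ≤ Y.card := by rw [hYc]; exact Nat.le_ceil _
  have hXhi : (X.card : ℝ) < n / 4 - ε * n + 1 := by
    rw [hXc]; exact Nat.ceil_lt_add_one (by linarith)
  have hYhi : (Y.card : ℝ) < 3 * (n : ℝ) / 4 - ε * n + 1 := by
    rw [hYc]; exact Nat.ceil_lt_add_one (by linarith)
  obtain ⟨y, hyX, s, hsY, hs, he⟩ := exists_edge_of_large H hH _ _ hS X Y hXlo hYlo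
  by_cases hcase : ∀ i ∈ Y, w i ≤ 1 / 8
  · have hy : -(1 / 2) ≤ h y := by
      have h1 := hedge y s he
      have h2 : ∑ i ∈ s, w i ≤ s.card • (1 / 8 : ℝ) :=
        Finset.sum_le_card_nsmul _ _ _ fun i hi => hcase i (hsY hi)
      rw [hs] at h2
      norm_num at h2
      linarith
    have hsum : ∑ z, (-(1 / 2) + if z ∈ X then -(1 / 2 : ℝ) else 0) ≤ ∑ z, h z := by
      refine Finset.sum_le_sum fun z _ => ?_
      split_ifs with hz
      · linarith [hh z]
      · linarith [hX y hyX z hz]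
    rw [Finset.sum_add_distrib, Finset.sum_ite_mem, Finset.univ_inter, Finset.sum_const,
      Finset.sum_const, Finset.card_univ, Fintype.card_fin, nsmul_eq_mul, nsmul_eq_mul] at hsum
    have hgap := sum_triple_ind_le_of_mean_gap w hw (η := ε / 4) (by positivity) (by linarith)
      (by rw [Fintype.card_fin]; linarith)
    rw [Fintype.card_fin] at hgap
    refine hbig (hgap.trans ?_)
    gcongr
    linarith
  · push Not at hcase
    obtain ⟨i, hiY, hi⟩ := hcase
    have htail : ∑ j, (1 + if j ∈ Y then (-1 : ℝ) else 0) ≤ ∑ j, eighthInd (w j) := by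
      refine Finset.sum_le_sum fun j _ => ?_
      unfold eighthInd
      split_ifs with h1 h2 h2
      · norm_num
      · norm_num
      · norm_num
      · linarith [hY i hiY j h1]
    rw [Finset.sum_add_distrib, Finset.sum_ite_mem, Finset.univ_inter, Finset.sum_const,
      Finset.sum_const, Finset.card_univ, Fintype.card_fin, nsmul_eq_mul, nsmul_eq_mul] at htail
    have hsum : ∑ _z : Fin m, (-1 : ℝ) ≤ ∑ z, h z := Finset.sum_le_sum fun z _ => hh z
    rw [Finset.sum_const, Finset.card_univ, Fintype.card_fin, nsmul_eq_mul] at hsum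
    have hgap := sum_triple_ind_le_of_tail w hw (η := ε / 2) (by rw [Fintype.card_fin]; linarith)
      (by rw [Fintype.card_fin]; linarith)
    rw [Fintype.card_fin] at hgap
    refine hbig (hgap.trans (le_of_eq ?_))
    ring

/-- For every `ε > 0` there exist `ρ > 0` (small in terms of `ε`) and
`n₀ = n₀(ε)` such that for every `n ≥ n₀` with `n ≡ 0 (mod 4)`: if `H` is a balanced
`(1,4)`-partite 5-graph with classes `X = Fin (n/4)`, `[n]` satisfying
`d_H({x,v}) ≥ C(n-1,3) - C(3n/4,3) - 3ρn³` for all `x ∈ X`, `v ∈ [n]`, and `H` has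
no independent set `S` with `|S ∩ X| ≥ n/4 - εn` and `|S ∩ [n]| ≥ 3n/4 - εn`, then
`H` has a fractional perfect matching. -/
theorem fractional_perfect_matching (ε : ℝ) (hε : 0 < ε) :
    ∃ ρ : ℝ, 0 < ρ ∧ ρ < ε ∧ ∃ n₀ : ℕ, ∀ n : ℕ, n₀ ≤ n → 4 ∣ n →
    ∀ H : Finset (Finset (Fin (n / 4) ⊕ Fin n)),
      (∀ e ∈ H, ∃ (x : Fin (n / 4)) (s : Finset (Fin n)),
        s.card = 4 ∧ e = insert (Sum.inl x) (s.image Sum.inr)) →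
      (∀ (x : Fin (n / 4)) (v : Fin n),
        (Nat.choose (n - 1) 3 : ℝ) - (Nat.choose (3 * n / 4) 3 : ℝ) - 3 * ρ * (n : ℝ) ^ 3
          ≤ ((H.filter (fun e => Sum.inl x ∈ e ∧ Sum.inr v ∈ e)).card : ℝ)) →
      (∀ S : Finset (Fin (n / 4) ⊕ Fin n),
        (∀ e ∈ H, ¬ e ⊆ S) →
        ¬ ((n : ℝ) / 4 - ε * n ≤ ((S.filter (fun v => v.isLeft = true)).card : ℝ) ∧
            3 * (n : ℝ) / 4 - ε * n ≤ ((S.filter (fun v => v.isRight = true)).card : ℝ))) →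
      ∃ f : Finset (Fin (n / 4) ⊕ Fin n) → ℝ,
        (∀ e, 0 ≤ f e) ∧ (∀ e, e ∉ H → f e = 0) ∧
        (∀ v : Fin (n / 4) ⊕ Fin n, ∑ e ∈ H.filter (fun e => v ∈ e), f e = 1) := by
  obtain ⟨δ, hδ0, hδε, hδ⟩ : ∃ δ : ℝ, 0 < δ ∧ δ ≤ ε ∧ δ ≤ 1 / 16 :=
    ⟨min ε (1 / 16), by positivity, min_le_left _ _, min_le_right _ _⟩
  refine ⟨δ / 10000, by positivity, by linarith, ⌈10000 / δ⌉₊, fun n hn h4 H hH hdeg hS => ?_⟩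
  replace hn : 10000 / δ ≤ n := Nat.ceil_le.1 hn
  have hnm : n = 4 * (n / 4) := (Nat.mul_div_cancel' h4).symm
  have hn0 : 0 < n := by
    have : (0 : ℝ) < n := lt_of_lt_of_le (by positivity) hn
    exact_mod_cast this
  have hm0 : 0 < n / 4 := by omega
  have hnR : (n : ℝ) = 4 * (n / 4 : ℕ) := by exact_mod_cast hnm
  have hS' : ∀ S : Finset (Fin (n / 4) ⊕ Fin n), (∀ e ∈ H, ¬ e ⊆ S) →
      ¬ ((n : ℝ) / 4 - δ * n ≤ ((S.filter (fun v => v.isLeft = true)).card : ℝ) ∧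
        3 * (n : ℝ) / 4 - δ * n ≤ ((S.filter (fun v => v.isRight = true)).card : ℝ)) := by
    intro S hSH hc
    have : δ * n ≤ ε * n := by gcongr
    exact hS S hSH ⟨by linarith [hc.1], by linarith [hc.2]⟩
  have : Nonempty (Fin (n / 4)) := ⟨⟨0, hm0⟩⟩
  have : Nonempty (Fin n) := ⟨⟨0, hn0⟩⟩
  rcases exists_fractional_perfect_matching_or_weight H
      ((Finset.univ : Finset (Fin (n / 4))).image Sum.inl) (fun e he => by
        obtain ⟨x, s, -, rfl⟩ := hH e he
        rw [Finset.card_eq_one]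
        refine ⟨Sum.inl x, ?_⟩
        ext (z | z) <;> simp) (by
        rw [Finset.card_image_of_injective _ Sum.inl_injective]; simpa using hm0) with hf | hg
  · exact hf
  exfalso
  obtain ⟨g, hg, htot⟩ := hg
  obtain ⟨x, hx⟩ := Finite.exists_min fun y => g (Sum.inl y)
  obtain ⟨v, hv⟩ := Finite.exists_min fun i => g (Sum.inr i)
  have hsplit : ∑ y, (g (Sum.inl y) + 4 * g (Sum.inr v)) + ∑ i, (g (Sum.inr i) - g (Sum.inr v))
      < 0 := by
    rw [Fintype.sum_sum_type] at htot
    simp only [Finset.sum_add_distrib, Finset.sum_sub_distrib, Finset.sum_const, Finset.card_univ,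
      Fintype.card_fin, nsmul_eq_mul]
    have : (n : ℝ) * g (Sum.inr v) = (n / 4 : ℕ) * (4 * g (Sum.inr v)) := by
      rw [← mul_assoc, mul_comm _ (4 : ℝ), ← hnR]
    linarith
  obtain ⟨t, ht⟩ : ∃ t, t = -(g (Sum.inl x) + 4 * g (Sum.inr v)) := ⟨_, rfl⟩
  have ht0 : 0 < t := by
    by_contra hle
    refine absurd hsplit (not_lt.2 (add_nonneg (Finset.sum_nonneg fun y _ => ?_)
      (Finset.sum_nonneg fun i _ => sub_nonneg.2 (hv i))))
    linarith [hx y]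
  refine false_of_normalized_weight hnm hδ0 hδ hn H hH hS' x v (hdeg x v)
    (fun y => (g (Sum.inl y) + 4 * g (Sum.inr v)) / t)
    (fun i => (g (Sum.inr i) - g (Sum.inr v)) / t)
    (fun i => div_nonneg (sub_nonneg.2 (hv i)) ht0.le) (fun y => ?_) ?_ (by simp)
    (fun y s he => ?_) ?_
  · rw [le_div_iff₀ ht0]
    linarith [hx y]
  · rw [div_eq_iff ht0.ne']
    linarith
  · have hs : s.card = 4 := by
      obtain ⟨y', s', hs', heq⟩ := hH _ he
      have : s = s' := by
        ext z
        have := Finset.ext_iff.1 heq (Sum.inr z)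
        simpa using this
      rw [this, hs']
    have hsum := hg _ he
    rw [Finset.sum_insert (by simp), Finset.sum_image fun a _ b _ hab => Sum.inr_injective hab]
      at hsum
    rw [← Finset.sum_div, ← add_div]
    refine div_nonneg ?_ ht0.le
    rw [Finset.sum_sub_distrib, Finset.sum_const, hs, nsmul_eq_mul]
    push_cast
    linarith
  · rw [← Finset.sum_div, ← Finset.sum_div, ← add_div]
    exact div_neg_of_neg_of_pos hsplit ht0
end
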